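/- Let d > 0 and p > 0, and let f ∈ C¹(Ω)∩C(Ω̄), f not identically zero, be such that the problem −Δφ = f in Ω, φ ≥ 0 in Ω, φ = 0 on ∂Ω has a classical solution φ ∈ C(Ω̄)∩C²(Ω). Assume also that Ω admits a torsion function ξ. Then there exists a positive number λ_f such that for every λ ∈ (0, λ_f) the Carrier problem −(1 + d‖u‖_2²) Δu = u^p + λ f(x) in Ω, u > 0 in Ω, u = 0 on ∂Ω has at least one classical solution. -/

import Mathlib

open MeasureTheory Set Real
open scoped ENNReal NNReal

noncomputable section

/-- The Laplacian of `u : ℝ^N → ℝ`, as the sum of second partial derivatives. -/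
def lapl {N : ℕ} (u : EuclideanSpace ℝ (Fin N) → ℝ) (x : EuclideanSpace ℝ (Fin N)) : ℝ :=
  ∑ i : Fin N, fderiv ℝ (fun y => fderiv ℝ u y (EuclideanSpace.single i 1)) x
    (EuclideanSpace.single i 1)

/-- The `L^p` norm of `u` on `Ω`. -/
def LpNorm {N : ℕ} (Ω : Set (EuclideanSpace ℝ (Fin N))) (p : ℝ≥0∞)
    (u : EuclideanSpace ℝ (Fin N) → ℝ) : ℝ :=
  (eLpNorm u p (volume.restrict Ω)).toReal

/-- The `L²` norm of the gradient of `u` on `Ω`. -/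
def gradNorm2 {N : ℕ} (Ω : Set (EuclideanSpace ℝ (Fin N)))
    (u : EuclideanSpace ℝ (Fin N) → ℝ) : ℝ :=
  (eLpNorm (fun x => gradient u x) 2 (volume.restrict Ω)).toReal

/-- A torsion function of `Ω`: `ξ ∈ C(Ω̄) ∩ C²(Ω)`, `ξ ≥ 0` in `Ω`, `-Δξ = 1` in `Ω`,
`ξ = 0` on `∂Ω`. -/
def IsTorsionFn {N : ℕ} (Ω : Set (EuclideanSpace ℝ (Fin N)))
    (ξ : EuclideanSpace ℝ (Fin N) → ℝ) : Prop :=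
  ContinuousOn ξ (closure Ω) ∧ ContDiffOn ℝ 2 ξ Ω ∧ (∀ x ∈ Ω, 0 ≤ ξ x) ∧
    (∀ x ∈ Ω, -lapl ξ x = 1) ∧ (∀ x ∈ frontier Ω, ξ x = 0)

/-!
Let `G = (-Δ)⁻¹` on `C(Ω̄)` and `φ = G f`. A positive solution of the Carrier problem is a
solution of `(1 + d‖u‖₂²) u = G((u⁺)ᵖ) + λ φ`.

The torsion function `ξ` makes `G` available on an arbitrary bounded domain: testing Kato's
inequality against `ξ` gives `|∫ h ψ| ≤ sup |h| · ∫ ξ |Δψ|`, so by `L²` duality `-Δw = h` has a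
weak solution with `|w| ≤ sup |h| · ξ`, which in particular vanishes on `∂Ω`. A dyadic mean value
formula supplies the interior gradient estimate, `C²` regularity and the strong minimum principle;
hence `G` is monotone and compact, and nonzero solutions of the fixed point equation are classical
and positive.

For `p > 1` the equation is a small perturbation of the identity near `u = 0`, and the inverse
function theorem solves it for small `λ`. For `p < 1` the sublinear problem `G((u⁺)ᵖ) + λ φ = t u`
has a least solution `u_t` depending continuously and monotonically on `t`, and `t = 1 + d‖u_t‖₂²`
is solved by the intermediate value theorem. For `p = 1` the nonlocal term bounds the solutions
obtained for `p < 1` uniformly, and compactness allows the limit `p → 1`.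
-/

open Filter Topology TopologicalSpace
open scoped ContDiff Convolution Distributions InnerProductSpace Laplacian Manifold

local notation:max "ℝ^" N:max => EuclideanSpace ℝ (Fin N)

section LaplacianCalculus

variable {N : ℕ}

/-- The partial derivative `∂ᵢ u`, so that `lapl u` is by definition `∑ i, ∂ᵢ (∂ᵢ u)`. -/
def partialDeriv (i : Fin N) (u : ℝ^N → ℝ) (x : ℝ^N) : ℝ :=
  fderiv ℝ u x (EuclideanSpace.single i 1)

lemma lapl_eq_sum_partialDeriv (u : ℝ^N → ℝ) (x : ℝ^N) :
    lapl u x = ∑ i, partialDeriv i (partialDeriv i u) x := rfl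

lemma measurable_lapl (u : ℝ^N → ℝ) : Measurable (lapl u) :=
  Finset.measurable_fun_sum _ fun _ _ ↦ measurable_fderiv_apply_const ℝ _ _

variable {u v : ℝ^N → ℝ} {x : ℝ^N}

lemma partialDeriv_congr (i : Fin N) (h : u =ᶠ[𝓝 x] v) :
    partialDeriv i u =ᶠ[𝓝 x] partialDeriv i v := by
  filter_upwards [h.fderiv (𝕜 := ℝ)] with y hy
  simp [partialDeriv, hy]

lemma lapl_congr (h : u =ᶠ[𝓝 x] v) : lapl u x = lapl v x :=
  Finset.sum_congr rfl fun i _ ↦ (partialDeriv_congr i (partialDeriv_congr i h)).eq_of_nhds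

lemma eqOn_lapl {Ω : Opens ℝ^N} (h : EqOn u v Ω) : EqOn (lapl u) (lapl v) Ω := fun _ hx ↦
  lapl_congr (h.eventuallyEq_of_mem (Ω.isOpen.mem_nhds hx))

lemma lapl_zero : lapl (0 : ℝ^N → ℝ) = 0 := by
  ext x
  simp [lapl]

lemma contDiffAt_partialDeriv (i : Fin N) (h : ContDiffAt ℝ 2 u x) :
    ContDiffAt ℝ 1 (partialDeriv i u) x :=
  (h.fderiv_right (m := 1) (by norm_num)).clm_apply contDiffAt_const

lemma contDiff_partialDeriv (i : Fin N) (h : ContDiff ℝ 2 u) : ContDiff ℝ 1 (partialDeriv i u) :=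
  contDiff_iff_contDiffAt.2 fun _ ↦ contDiffAt_partialDeriv i h.contDiffAt

lemma continuousAt_partialDeriv (i : Fin N) (h : ContDiffAt ℝ 1 u x) :
    ContinuousAt (partialDeriv i u) x :=
  ((h.fderiv_right (m := 0) (by norm_num)).clm_apply contDiffAt_const).continuousAt

lemma continuous_partialDeriv (i : Fin N) (h : ContDiff ℝ 1 u) : Continuous (partialDeriv i u) :=
  continuous_iff_continuousAt.2 fun _ ↦ continuousAt_partialDeriv i h.contDiffAt

lemma continuousAt_lapl (h : ContDiffAt ℝ 2 u x) : ContinuousAt (lapl u) x :=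
  tendsto_finsetSum _ fun i _ ↦ continuousAt_partialDeriv i (contDiffAt_partialDeriv i h)

lemma continuous_lapl (h : ContDiff ℝ 2 u) : Continuous (lapl u) :=
  continuous_iff_continuousAt.2 fun _ ↦ continuousAt_lapl h.contDiffAt

lemma continuousOn_lapl {Ω : Opens ℝ^N} (h : ContDiffOn ℝ 2 u Ω) : ContinuousOn (lapl u) Ω :=
  fun _ hx ↦ (continuousAt_lapl (h.contDiffAt (Ω.isOpen.mem_nhds hx))).continuousWithinAt

lemma tsupport_partialDeriv_subset (i : Fin N) : tsupport (partialDeriv i u) ⊆ tsupport u :=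
  tsupport_fderiv_apply_subset ℝ (EuclideanSpace.single i 1)

lemma lapl_eq_zero_of_notMem_tsupport (h : x ∉ tsupport u) : lapl u x = 0 :=
  Finset.sum_eq_zero fun i _ ↦ image_eq_zero_of_notMem_tsupport (f := partialDeriv i _)
    fun hx ↦ h (tsupport_partialDeriv_subset i (tsupport_partialDeriv_subset i hx))

lemma tsupport_lapl_subset : tsupport (lapl u) ⊆ tsupport u :=
  closure_minimal (fun _ hx ↦ by_contra fun h ↦ hx (lapl_eq_zero_of_notMem_tsupport h))
    (isClosed_tsupport u)

lemma hasCompactSupport_lapl (h : HasCompactSupport u) : HasCompactSupport (lapl u) :=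
  h.mono' (subset_closure.trans tsupport_lapl_subset)

lemma lapl_eq_laplacian (h : ContDiffAt ℝ 2 u x) : lapl u x = Δ u x := by
  have hd : DifferentiableAt ℝ (fderiv ℝ u) x :=
    (h.fderiv_right (m := 1) (by norm_num)).differentiableAt (by norm_num)
  rw [InnerProductSpace.laplacian_eq_iteratedFDeriv_orthonormalBasis u
    (EuclideanSpace.basisFun (Fin N) ℝ)]
  refine Finset.sum_congr rfl fun i _ ↦ ?_
  rw [iteratedFDeriv_two_apply, fderiv_clm_apply hd (by fun_prop)]
  simp

lemma lapl_add (hu : ContDiffAt ℝ 2 u x) (hv : ContDiffAt ℝ 2 v x) :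
    lapl (u + v) x = lapl u x + lapl v x := by
  rw [lapl_eq_laplacian (u := u + v) (hu.add hv), hu.laplacian_add hv, lapl_eq_laplacian hu,
    lapl_eq_laplacian hv]

lemma lapl_const_smul (c : ℝ) (hu : ContDiffAt ℝ 2 u x) : lapl (c • u) x = c * lapl u x := by
  rw [lapl_eq_laplacian (u := c • u) (contDiffAt_const.smul hu),
    InnerProductSpace.laplacian_smul c hu, lapl_eq_laplacian hu, smul_eq_mul]

lemma partialDeriv_mul (i : Fin N) (hu : DifferentiableAt ℝ u x) (hv : DifferentiableAt ℝ v x) :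
    partialDeriv i (fun y ↦ u y * v y) x = u x * partialDeriv i v x + partialDeriv i u x * v x := by
  simp [partialDeriv, fderiv_fun_mul hu hv]
  ring

lemma partialDeriv_comp (i : Fin N) {k : ℝ → ℝ} {k' : ℝ} (hk : HasDerivAt k k' (u x))
    (hu : DifferentiableAt ℝ u x) :
    partialDeriv i (fun y ↦ k (u y)) x = k' * partialDeriv i u x := by
  have h : fderiv ℝ (fun y ↦ k (u y)) x = k' • fderiv ℝ u x :=
    (hk.comp_hasFDerivAt x hu.hasFDerivAt).fderiv
  simp [partialDeriv, h]

lemma lapl_comp {k k' k'' : ℝ → ℝ} (hk : ∀ t, HasDerivAt k (k' t) t)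
    (hk' : ∀ t, HasDerivAt k' (k'' t) t) (hu : ContDiffAt ℝ 2 u x) :
    lapl (fun y ↦ k (u y)) x =
      k'' (u x) * ∑ i, partialDeriv i u x ^ 2 + k' (u x) * lapl u x := by
  have hu_diff : ∀ᶠ y in 𝓝 x, DifferentiableAt ℝ u y :=
    (hu.eventually (by simp)).mono fun y hy ↦ hy.differentiableAt (by norm_num)
  simp only [lapl_eq_sum_partialDeriv, Finset.mul_sum, ← Finset.sum_add_distrib]
  refine Finset.sum_congr rfl fun i _ ↦ ?_
  have hfirst : partialDeriv i (fun y ↦ k (u y)) =ᶠ[𝓝 x] fun y ↦ k' (u y) * partialDeriv i u y :=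
    hu_diff.mono fun y hy ↦ partialDeriv_comp i (hk _) hy
  rw [(partialDeriv_congr i hfirst).eq_of_nhds,
    partialDeriv_mul (u := fun y ↦ k' (u y)) i
      ((hk' _).differentiableAt.comp x hu_diff.self_of_nhds)
      ((contDiffAt_partialDeriv i hu).differentiableAt (by norm_num)),
    partialDeriv_comp i (hk' _) hu_diff.self_of_nhds]
  ring

lemma partialDeriv_norm_sq (i : Fin N) :
    partialDeriv i (fun y : ℝ^N ↦ ‖y‖ ^ 2) = fun x ↦ 2 * x i := by
  ext x
  rw [partialDeriv, (hasStrictFDerivAt_norm_sq x).hasFDerivAt.fderiv]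
  simp [EuclideanSpace.inner_single_right]

lemma lapl_norm_sq (x : ℝ^N) : lapl (fun y : ℝ^N ↦ ‖y‖ ^ 2) x = 2 * N := by
  have h (i : Fin N) : partialDeriv i (fun y : ℝ^N ↦ 2 * y i) x = 2 := by
    have hproj : HasFDerivAt (fun y : ℝ^N ↦ 2 * y i) _ x :=
      (EuclideanSpace.proj (𝕜 := ℝ) i).hasFDerivAt.const_mul 2
    rw [partialDeriv, hproj.fderiv]
    simp
  simp only [lapl_eq_sum_partialDeriv, partialDeriv_norm_sq, h, Finset.sum_const,
    Finset.card_univ, Fintype.card_fin, nsmul_eq_mul, mul_comm]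

lemma partialDeriv_comp_const_smul_const_sub (i : Fin N) (c : ℝ) (a : ℝ^N)
    (hu : DifferentiableAt ℝ u (c • (a - x))) :
    partialDeriv i (fun z ↦ u (c • (a - z))) x = -c * partialDeriv i u (c • (a - x)) := by
  have hinner : HasFDerivAt (fun z : ℝ^N ↦ c • (a - z)) (c • (-ContinuousLinearMap.id ℝ ℝ^N)) x :=
    ((hasFDerivAt_id (𝕜 := ℝ) x).const_sub a).const_smul c
  have h : fderiv ℝ (fun z ↦ u (c • (a - z))) x = _ := (hu.hasFDerivAt.comp x hinner).fderiv
  simp [partialDeriv, h]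

lemma lapl_comp_const_smul_const_sub (hu : ContDiff ℝ 2 u) (c : ℝ) (a x : ℝ^N) :
    lapl (fun z ↦ u (c • (a - z))) x = c ^ 2 * lapl u (c • (a - x)) := by
  simp only [lapl_eq_sum_partialDeriv, Finset.mul_sum]
  refine Finset.sum_congr rfl fun i _ ↦ ?_
  have hfirst : partialDeriv i (fun z ↦ u (c • (a - z))) =
      fun z ↦ (fun y ↦ -c * partialDeriv i u y) (c • (a - z)) :=
    funext fun z ↦ partialDeriv_comp_const_smul_const_sub i c a (hu.differentiable (by norm_num) _)
  have hdiff : Differentiable ℝ (partialDeriv i u) :=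
    (contDiff_partialDeriv i hu).differentiable (by norm_num)
  rw [hfirst, partialDeriv_comp_const_smul_const_sub i c a ((hdiff _).const_mul _),
    partialDeriv_mul i (by fun_prop) (hdiff _)]
  simp [partialDeriv]
  ring

end LaplacianCalculus

section Green

lemma exists_contDiff_hasCompactSupport_eventuallyEq_nhdsSet {E F : Type*} [NormedAddCommGroup E]
    [NormedSpace ℝ E] [FiniteDimensional ℝ E] [NormedAddCommGroup F] [NormedSpace ℝ F] {n : ℕ∞}
    {Ω K : Set E} {w : E → F} (hΩ : IsOpen Ω) (hK : IsCompact K) (hKΩ : K ⊆ Ω)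
    (hw : ContDiffOn ℝ n w Ω) :
    ∃ g : E → F, ContDiff ℝ n g ∧ HasCompactSupport g ∧ g =ᶠ[𝓝ˢ K] w := by
  obtain ⟨L, hL, hKL, hLΩ⟩ := exists_compact_between hK hΩ hKΩ
  obtain ⟨χ, hχ_one, hχ_zero, -⟩ :=
    exists_contMDiffMap_one_nhds_of_subset_interior (n := n) 𝓘(ℝ, E) hK.isClosed hKL
  have hχ_supp : tsupport χ ⊆ L :=
    closure_minimal (fun x hx ↦ by_contra fun h ↦ hx (hχ_zero x h)) hL.isClosed
  have hχ : ContDiff ℝ n χ := χ.contMDiff.contDiff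
  refine ⟨fun x ↦ χ x • w x, ?_, ?_, ?_⟩
  · refine contMDiff_iff_contDiff.1 (contMDiff_of_tsupport fun x hx ↦ ?_)
    refine (hχ.contDiffAt.smul ?_).contMDiffAt
    exact hw.contDiffAt (hΩ.mem_nhds (hLΩ (hχ_supp (tsupport_smul_subset_left χ w hx))))
  · exact (HasCompactSupport.intro hL hχ_zero).smul_right
  · filter_upwards [hχ_one] with x hx
    rw [hx, one_smul]

variable {N : ℕ}

lemma integral_mul_partialDeriv_partialDeriv {u v : ℝ^N → ℝ} (i : Fin N) (hu : ContDiff ℝ 2 u)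
    (hu_supp : HasCompactSupport u) (hv : ContDiff ℝ 2 v) :
    ∫ x, u x * partialDeriv i (partialDeriv i v) x =
      -∫ x, partialDeriv i u x * partialDeriv i v x := by
  have hv' := contDiff_partialDeriv i hv
  have hu'_supp : HasCompactSupport (partialDeriv i u) := hu_supp.fderiv_apply ℝ _
  refine integral_mul_fderiv_eq_neg_fderiv_mul_of_integrable ?_ ?_ ?_
    (fun x _ ↦ hu.differentiable (by norm_num) x) (fun x _ ↦ hv'.differentiable (by norm_num) x)
  · exact ((continuous_partialDeriv i (hu.of_le (by norm_num))).mul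
      hv'.continuous).integrable_of_hasCompactSupport hu'_supp.mul_right
  · exact (hu.continuous.mul
      (continuous_partialDeriv i hv')).integrable_of_hasCompactSupport hu_supp.mul_right
  · exact (hu.continuous.mul hv'.continuous).integrable_of_hasCompactSupport hu_supp.mul_right

lemma integral_mul_lapl_eq_neg_sum {u v : ℝ^N → ℝ} (hu : ContDiff ℝ 2 u)
    (hu_supp : HasCompactSupport u) (hv : ContDiff ℝ 2 v) :
    ∫ x, u x * lapl v x = -∑ i, ∫ x, partialDeriv i u x * partialDeriv i v x := by
  simp only [lapl_eq_sum_partialDeriv, Finset.mul_sum, ← Finset.sum_neg_distrib]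
  rw [integral_finsetSum]
  · exact Finset.sum_congr rfl fun i _ ↦ integral_mul_partialDeriv_partialDeriv i hu hu_supp hv
  · exact fun i _ ↦ (hu.continuous.mul (continuous_partialDeriv i
      (contDiff_partialDeriv i hv))).integrable_of_hasCompactSupport hu_supp.mul_right

lemma integral_mul_lapl_comm {u v : ℝ^N → ℝ} (hu : ContDiff ℝ 2 u) (hu_supp : HasCompactSupport u)
    (hv : ContDiff ℝ 2 v) (hv_supp : HasCompactSupport v) :
    ∫ x, u x * lapl v x = ∫ x, v x * lapl u x := by
  rw [integral_mul_lapl_eq_neg_sum hu hu_supp hv, integral_mul_lapl_eq_neg_sum hv hv_supp hu]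
  simp only [mul_comm]

lemma integrable_mul_of_tsupport_subset {Ω K : Set ℝ^N} {w g : ℝ^N → ℝ} (hΩ : IsOpen Ω)
    (hw : ContinuousOn w Ω) (hg : Continuous g) (hK : IsCompact K) (hgK : tsupport g ⊆ K)
    (hKΩ : K ⊆ Ω) : Integrable (fun x ↦ w x * g x) := by
  have hg_supp : HasCompactSupport g := hK.of_isClosed_subset (isClosed_tsupport g) hgK
  refine Continuous.integrable_of_hasCompactSupport ?_ hg_supp.mul_left
  exact (hw.mul hg.continuousOn).continuous_of_tsupport_subset hΩ
    ((tsupport_mul_subset_right (f := w) (g := g)).trans (hgK.trans hKΩ))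

theorem integral_mul_lapl_testFunction {Ω : Opens ℝ^N} {w : ℝ^N → ℝ} (hw : ContDiffOn ℝ 2 w Ω)
    (ψ : 𝓓^{2}(Ω, ℝ)) : ∫ x, w x * lapl ψ x = ∫ x, ψ x * lapl w x := by
  obtain ⟨g, hg, hg_supp, hgw⟩ := exists_contDiff_hasCompactSupport_eventuallyEq_nhdsSet Ω.isOpen
    ψ.hasCompactSupport ψ.tsupport_subset hw
  have hgw_nhds {x} (hx : x ∈ tsupport ψ) : g =ᶠ[𝓝 x] w := hgw.filter_mono (nhds_le_nhdsSet hx)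
  calc ∫ x, w x * lapl ψ x = ∫ x, g x * lapl ψ x := by
        congr with x
        by_cases hx : x ∈ tsupport ψ
        · rw [(hgw_nhds hx).eq_of_nhds]
        · simp [lapl_eq_zero_of_notMem_tsupport hx]
    _ = ∫ x, ψ x * lapl g x := integral_mul_lapl_comm hg hg_supp ψ.contDiff ψ.hasCompactSupport
    _ = ∫ x, ψ x * lapl w x := by
        congr with x
        by_cases hx : x ∈ tsupport ψ
        · rw [lapl_congr (hgw_nhds hx)]
        · simp [image_eq_zero_of_notMem_tsupport hx]

end Green

section Kato

/-- The convex smooth approximation `√(t² + ε²) - ε` of `|t|`. -/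
def smoothAbs (ε t : ℝ) : ℝ := √(t ^ 2 + ε ^ 2) - ε

variable {ε : ℝ}

lemma abs_smoothAbs_le (hε : 0 ≤ ε) (t : ℝ) : |smoothAbs ε t| ≤ |t| := by
  have hlower : ε ≤ √(t ^ 2 + ε ^ 2) := Real.le_sqrt_of_sq_le (by nlinarith)
  have hupper : √(t ^ 2 + ε ^ 2) ≤ |t| + ε :=
    Real.sqrt_le_iff.2 ⟨by positivity, by nlinarith [sq_abs t, abs_nonneg t]⟩
  rw [smoothAbs, abs_of_nonneg (by linarith)]
  linarith

lemma smoothAbs_zero (hε : 0 ≤ ε) : smoothAbs ε 0 = 0 := by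
  simpa using abs_smoothAbs_le hε 0

lemma tendsto_smoothAbs_zero (t : ℝ) : Tendsto (smoothAbs · t) (𝓝 0) (𝓝 |t|) := by
  have hcont : Continuous (smoothAbs · t) := by unfold smoothAbs; fun_prop
  simpa [smoothAbs, Real.sqrt_sq_eq_abs] using hcont.tendsto 0

lemma hasDerivAt_sqrt_sq_add_sq (hε : 0 < ε) (t : ℝ) :
    HasDerivAt (fun s ↦ √(s ^ 2 + ε ^ 2)) (t / √(t ^ 2 + ε ^ 2)) t := by
  have h : HasDerivAt (fun s : ℝ ↦ s ^ 2 + ε ^ 2) (2 * t) t := by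
    simpa using (hasDerivAt_pow 2 t).add_const (ε ^ 2)
  convert! h.sqrt (by positivity) using 1
  field_simp

lemma hasDerivAt_smoothAbs (hε : 0 < ε) (t : ℝ) :
    HasDerivAt (smoothAbs ε) (t / √(t ^ 2 + ε ^ 2)) t :=
  (hasDerivAt_sqrt_sq_add_sq hε t).sub_const ε

lemma hasDerivAt_div_sqrt_sq_add_sq (hε : 0 < ε) (t : ℝ) :
    HasDerivAt (fun s ↦ s / √(s ^ 2 + ε ^ 2)) (ε ^ 2 / √(t ^ 2 + ε ^ 2) ^ 3) t := by
  have hpos : 0 < √(t ^ 2 + ε ^ 2) := by positivity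
  convert! (hasDerivAt_id t).div (hasDerivAt_sqrt_sq_add_sq hε t) hpos.ne' using 1
  have hsq : √(t ^ 2 + ε ^ 2) ^ 2 = t ^ 2 + ε ^ 2 := Real.sq_sqrt (by positivity)
  simp only [id]
  field_simp
  rw [hsq]
  ring

lemma contDiff_smoothAbs (hε : 0 < ε) {n : ℕ∞} : ContDiff ℝ n (smoothAbs ε) :=
  (ContDiff.sqrt (by fun_prop) fun t ↦ by positivity).sub contDiff_const

variable {N : ℕ}

lemma neg_lapl_smoothAbs_le {u : ℝ^N → ℝ} {x : ℝ^N} (hε : 0 < ε) (hu : ContDiffAt ℝ 2 u x) :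
    -lapl (fun y ↦ smoothAbs ε (u y)) x ≤ |lapl u x| := by
  have hpos : 0 < √(u x ^ 2 + ε ^ 2) := by positivity
  have hconvex : 0 ≤ ε ^ 2 / √(u x ^ 2 + ε ^ 2) ^ 3 * ∑ i, partialDeriv i u x ^ 2 := by positivity
  have hslope : |u x / √(u x ^ 2 + ε ^ 2)| ≤ 1 := by
    rw [abs_div, abs_of_pos hpos, div_le_one hpos]
    exact Real.abs_le_sqrt (by nlinarith)
  have hslope_mul : -(u x / √(u x ^ 2 + ε ^ 2) * lapl u x) ≤ |lapl u x| := by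
    refine (neg_le_abs _).trans ?_
    rw [abs_mul]
    exact mul_le_of_le_one_left (abs_nonneg _) hslope
  rw [lapl_comp (hasDerivAt_smoothAbs hε) (hasDerivAt_div_sqrt_sq_add_sq hε) hu]
  linarith

variable {Ω : Opens ℝ^N} {ξ : ℝ^N → ℝ}

lemma integrable_mul_abs_lapl (hξ : ContinuousOn ξ Ω) (ψ : 𝓓^{2}(Ω, ℝ)) :
    Integrable (fun x ↦ ξ x * |lapl ψ x|) :=
  integrable_mul_of_tsupport_subset Ω.isOpen hξ (continuous_lapl ψ.contDiff).abs
    ψ.hasCompactSupport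
    ((closure_mono (Function.support_comp_subset abs_zero _)).trans tsupport_lapl_subset)
    ψ.tsupport_subset

lemma integral_smoothAbs_mul_neg_lapl_le (hε : 0 < ε) (hξ : ContDiffOn ℝ 2 ξ Ω)
    (hξ_nonneg : ∀ x ∈ Ω, 0 ≤ ξ x) (ψ : 𝓓^{2}(Ω, ℝ)) :
    ∫ x, smoothAbs ε (ψ x) * -lapl ξ x ≤ ∫ x, ξ x * |lapl ψ x| := by
  have hsupp : tsupport (fun x ↦ smoothAbs ε (ψ x)) ⊆ tsupport ψ :=
    closure_mono fun x hx h ↦ hx (by simp [h, smoothAbs_zero hε.le])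
  let ψε : 𝓓^{2}(Ω, ℝ) := ⟨fun x ↦ smoothAbs ε (ψ x), (contDiff_smoothAbs hε).comp ψ.contDiff,
    ψ.hasCompactSupport.of_isClosed_subset (isClosed_tsupport _) hsupp,
    hsupp.trans ψ.tsupport_subset⟩
  calc ∫ x, smoothAbs ε (ψ x) * -lapl ξ x = ∫ x, ξ x * -lapl ψε x := by
        simp only [mul_neg, integral_neg, integral_mul_lapl_testFunction hξ ψε]
        rfl
    _ ≤ ∫ x, ξ x * |lapl ψ x| := by
        refine integral_mono ?_ (integrable_mul_abs_lapl hξ.continuousOn ψ) fun x ↦ ?_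
        · simp only [mul_neg]
          exact (integrable_mul_of_tsupport_subset Ω.isOpen hξ.continuousOn
            (continuous_lapl ψε.contDiff) ψε.hasCompactSupport tsupport_lapl_subset
            ψε.tsupport_subset).neg
        by_cases hx : x ∈ tsupport ψ
        · exact mul_le_mul_of_nonneg_left (neg_lapl_smoothAbs_le hε ψ.contDiff.contDiffAt)
            (hξ_nonneg x (ψ.tsupport_subset hx))
        · have hx' : x ∉ tsupport ψε := fun h ↦ hx (hsupp h)
          simp [lapl_eq_zero_of_notMem_tsupport hx, lapl_eq_zero_of_notMem_tsupport hx']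

/- Kato's inequality `-Δ|ψ| ≤ |Δψ|`, tested against `ξ ≥ 0`. -/
theorem integral_abs_mul_neg_lapl_le (hξ : ContDiffOn ℝ 2 ξ Ω) (hξ_nonneg : ∀ x ∈ Ω, 0 ≤ ξ x)
    (ψ : 𝓓^{2}(Ω, ℝ)) : ∫ x, |ψ x| * -lapl ξ x ≤ ∫ x, ξ x * |lapl ψ x| := by
  have hε_pos : ∀ᶠ ε : ℝ in 𝓝[>] 0, 0 < ε := self_mem_nhdsWithin
  have hbound : Integrable (fun x ↦ |lapl ξ x * ψ x|) :=
    (integrable_mul_of_tsupport_subset Ω.isOpen (continuousOn_lapl hξ) ψ.continuous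
      ψ.hasCompactSupport subset_rfl ψ.tsupport_subset).abs
  have hmeas (ε : ℝ) : AEStronglyMeasurable (fun x ↦ smoothAbs ε (ψ x) * -lapl ξ x) := by
    have hε : Continuous (smoothAbs ε) := by unfold smoothAbs; fun_prop
    exact ((hε.comp ψ.continuous).measurable.mul (measurable_lapl ξ).neg).aestronglyMeasurable
  have hlim : Tendsto (fun ε ↦ ∫ x, smoothAbs ε (ψ x) * -lapl ξ x) (𝓝[>] 0)
      (𝓝 (∫ x, |ψ x| * -lapl ξ x)) := by
    refine tendsto_integral_filter_of_dominated_convergence _ (.of_forall hmeas) ?_ hbound ?_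
    · filter_upwards [hε_pos] with ε hε
      refine .of_forall fun x ↦ ?_
      rw [Real.norm_eq_abs, abs_mul, abs_neg, mul_comm, abs_mul]
      exact mul_le_mul_of_nonneg_left (abs_smoothAbs_le hε.le _) (abs_nonneg _)
    · exact .of_forall fun x ↦
        ((tendsto_smoothAbs_zero (ψ x)).mono_left nhdsWithin_le_nhds).mul_const _
  exact le_of_tendsto hlim (hε_pos.mono fun ε hε ↦
    integral_smoothAbs_mul_neg_lapl_le hε hξ hξ_nonneg ψ)

end Kato

section L2Duality

variable {α : Type*} [MeasurableSpace α] {μ : Measure α}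

lemma lp_two_inner_nonneg {f g : Lp ℝ 2 μ} (hf : 0 ≤ f) (hg : 0 ≤ g) : 0 ≤ ⟪f, g⟫_ℝ := by
  rw [L2.inner_def]
  refine integral_nonneg_of_ae ?_
  filter_upwards [(Lp.coeFn_nonneg f).2 hf, (Lp.coeFn_nonneg g).2 hg] with x hfx hgx
  exact mul_nonneg hgx hfx

lemma lp_abs_smul (c : ℝ) (f : Lp ℝ 2 μ) : |c • f| = |c| • |f| := by
  refine Lp.ext ?_
  filter_upwards [Lp.coeFn_abs (c • f), Lp.coeFn_smul c f, Lp.coeFn_smul |c| |f|, Lp.coeFn_abs f]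
    with x habs hsmul hsmul' habs'
  rw [habs, hsmul, hsmul', Pi.smul_apply, Pi.smul_apply, habs', smul_eq_mul, smul_eq_mul, abs_mul]

lemma lp_two_inner_sup_zero_self (f : Lp ℝ 2 μ) : ⟪f, f ⊔ 0⟫_ℝ = ⟪f ⊔ 0, f ⊔ 0⟫_ℝ := by
  simp only [L2.inner_def]
  refine integral_congr_ae ?_
  filter_upwards [Lp.coeFn_sup f 0, Lp.coeFn_zero ℝ 2 μ] with x hsup hzero
  simp only [hsup, Pi.sup_apply, hzero, Pi.zero_apply]
  rcases le_total (f x) 0 with h | h <;> simp [h]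

lemma lp_two_le_of_forall_inner_le {f g : Lp ℝ 2 μ} (h : ∀ k, 0 ≤ k → ⟪f, k⟫_ℝ ≤ ⟪g, k⟫_ℝ) :
    f ≤ g := by
  have hpos : ⟪f - g, (f - g) ⊔ 0⟫_ℝ ≤ 0 := by
    rw [inner_sub_left]
    exact sub_nonpos.2 (h _ le_sup_right)
  rw [lp_two_inner_sup_zero_self, real_inner_self_nonpos] at hpos
  exact sub_nonpos.1 (sup_eq_right.1 hpos)

/- Hahn–Banach dominates the extension by `g ↦ ⟪ρ, |g|⟫`; testing the resulting Riesz
representative against nonnegative functions gives the pointwise bound. -/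
theorem exists_lp_two_abs_le_forall_inner_eq {V : Type*} [AddCommGroup V] [Module ℝ V]
    (L : V →ₗ[ℝ] Lp ℝ 2 μ) (J : Module.Dual ℝ V) {ρ : Lp ℝ 2 μ} (hρ : 0 ≤ ρ)
    (hJ : ∀ v, J v ≤ ⟪ρ, |L v|⟫_ℝ) : ∃ w : Lp ℝ 2 μ, |w| ≤ ρ ∧ ∀ v, ⟪w, L v⟫_ℝ = J v := by
  obtain ⟨J', rfl⟩ : ∃ J' : Module.Dual ℝ (Lp ℝ 2 μ), L.dualMap J' = J := by
    rw [← LinearMap.mem_range, LinearMap.range_dualMap_eq_dualAnnihilator_ker,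
      Submodule.mem_dualAnnihilator]
    intro v hv
    have h := hJ v
    have hneg := hJ (-v)
    simp only [map_neg, LinearMap.mem_ker.1 hv, neg_zero, abs_zero, inner_zero_right] at h hneg
    linarith
  obtain ⟨Λ, hΛ_eq, hΛ_le⟩ := exists_extension_of_le_sublinear
    ⟨LinearMap.range L, J'.domRestrict (LinearMap.range L)⟩ (fun g ↦ ⟪ρ, |g|⟫_ℝ)
    (fun c hc g ↦ by rw [lp_abs_smul, abs_of_pos hc, inner_smul_right])
    (fun f g ↦ by
      rw [← inner_add_right, ← sub_nonneg, ← inner_sub_right]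
      exact lp_two_inner_nonneg hρ (sub_nonneg.2 (abs_add_le f g)))
    (by rintro ⟨_, v, rfl⟩; exact hJ v)
  have hΛ_bound (g : Lp ℝ 2 μ) : ‖Λ g‖ ≤ ‖ρ‖ * ‖g‖ := by
    have hinner : ⟪ρ, |g|⟫_ℝ ≤ ‖ρ‖ * ‖g‖ := by
      simpa only [norm_abs_eq_norm] using real_inner_le_norm ρ |g|
    have hneg := hΛ_le (-g)
    rw [map_neg, abs_neg] at hneg
    exact abs_le.2 ⟨by linarith, (hΛ_le g).trans hinner⟩
  let w : Lp ℝ 2 μ := (InnerProductSpace.toDual ℝ _).symm (Λ.mkContinuous ‖ρ‖ hΛ_bound)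
  have hw (g : Lp ℝ 2 μ) : ⟪w, g⟫_ℝ = Λ g := InnerProductSpace.toDual_symm_apply
  refine ⟨w, abs_le'.2 ⟨?_, ?_⟩, fun v ↦ (hw _).trans (hΛ_eq ⟨L v, v, rfl⟩)⟩ <;>
    refine lp_two_le_of_forall_inner_le fun k hk ↦ ?_
  · simpa [hw, abs_of_nonneg hk] using hΛ_le k
  · simpa [hw, abs_of_nonneg hk] using hΛ_le (-k)

end L2Duality

section WeakSolution

variable {N : ℕ}

/-- `w` is a (very weak) solution of `-Δw = h` in `Ω`, tested against `C²` functions with compact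
support in `Ω`. -/
def IsWeakSolution (Ω : Opens ℝ^N) (w h : ℝ^N → ℝ) : Prop :=
  ∀ ψ : 𝓓^{2}(Ω, ℝ), ∫ x, w x * lapl ψ x = -∫ x, h x * ψ x

variable {Ω : Opens ℝ^N} {h ξ : ℝ^N → ℝ}

lemma setIntegral_mul_testFunction (f : ℝ^N → ℝ) (ψ : 𝓓^{2}(Ω, ℝ)) :
    ∫ x in Ω, f x * ψ x = ∫ x, f x * ψ x :=
  setIntegral_eq_integral_of_forall_compl_eq_zero fun x hx ↦ by
    simp [image_eq_zero_of_notMem_tsupport fun h ↦ hx (ψ.tsupport_subset h)]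

lemma setIntegral_mul_lapl_testFunction (f : ℝ^N → ℝ) (ψ : 𝓓^{2}(Ω, ℝ)) :
    ∫ x in Ω, f x * lapl ψ x = ∫ x, f x * lapl ψ x :=
  setIntegral_eq_integral_of_forall_compl_eq_zero fun x hx ↦ by
    simp [lapl_eq_zero_of_notMem_tsupport fun h ↦ hx (ψ.tsupport_subset h)]

lemma integral_abs_le_integral_torsion_mul_abs_lapl (hξ : IsTorsionFn Ω ξ) (ψ : 𝓓^{2}(Ω, ℝ)) :
    ∫ x, |ψ x| ≤ ∫ x in Ω, ξ x * |lapl ψ x| := by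
  obtain ⟨-, hξ_diff, hξ_nonneg, hξ_eq, -⟩ := hξ
  refine le_trans (le_of_eq ?_) ((integral_abs_mul_neg_lapl_le hξ_diff hξ_nonneg ψ).trans_eq ?_)
  · congr with x
    by_cases hx : x ∈ tsupport ψ
    · rw [hξ_eq x (ψ.tsupport_subset hx), mul_one]
    · simp [image_eq_zero_of_notMem_tsupport hx]
  · refine (setIntegral_eq_integral_of_forall_compl_eq_zero fun x hx ↦ ?_).symm
    simp [lapl_eq_zero_of_notMem_tsupport fun h ↦ hx (ψ.tsupport_subset h)]

lemma integrable_mul_testFunction {M : ℝ} (hh : AEStronglyMeasurable h (volume.restrict Ω))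
    (hM : ∀ x ∈ Ω, |h x| ≤ M) (ψ : 𝓓^{2}(Ω, ℝ)) :
    IntegrableOn (fun x ↦ h x * ψ x) Ω :=
  (ψ.continuous.integrable_of_hasCompactSupport ψ.hasCompactSupport).integrableOn.bdd_mul hh
    (ae_restrict_of_forall_mem Ω.isOpen.measurableSet hM)

lemma neg_integral_mul_testFunction_le {M : ℝ} (hξ : IsTorsionFn Ω ξ)
    (hh : AEStronglyMeasurable h (volume.restrict Ω)) (hM_nonneg : 0 ≤ M)
    (hM : ∀ x ∈ Ω, |h x| ≤ M) (ψ : 𝓓^{2}(Ω, ℝ)) :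
    -∫ x in Ω, h x * ψ x ≤ M * ∫ x in Ω, ξ x * |lapl ψ x| := by
  have hψ : Integrable ψ := ψ.continuous.integrable_of_hasCompactSupport ψ.hasCompactSupport
  calc -∫ x in Ω, h x * ψ x = ∫ x in Ω, -(h x * ψ x) := (integral_neg _).symm
    _ ≤ ∫ x in Ω, M * |ψ x| := by
        refine setIntegral_mono_on (integrable_mul_testFunction hh hM ψ).neg
          (hψ.abs.const_mul M).integrableOn Ω.isOpen.measurableSet fun x hx ↦ ?_
        refine (neg_le_abs _).trans ?_
        rw [abs_mul]
        exact mul_le_mul_of_nonneg_right (hM x hx) (abs_nonneg _)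
    _ ≤ ∫ x, M * |ψ x| := setIntegral_le_integral (hψ.abs.const_mul M)
        (.of_forall fun x ↦ mul_nonneg hM_nonneg (abs_nonneg _))
    _ ≤ M * ∫ x in Ω, ξ x * |lapl ψ x| := by
        rw [integral_const_mul]
        exact mul_le_mul_of_nonneg_left (integral_abs_le_integral_torsion_mul_abs_lapl hξ ψ)
          hM_nonneg

lemma memLp_lapl_testFunction (ψ : 𝓓^{2}(Ω, ℝ)) : MemLp (lapl ψ) 2 (volume.restrict Ω) :=
  ((continuous_lapl ψ.contDiff).memLp_of_hasCompactSupport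
    (hasCompactSupport_lapl ψ.hasCompactSupport)).restrict Ω

lemma memLp_torsion (hΩ : Bornology.IsBounded (Ω : Set ℝ^N)) (hξ : IsTorsionFn Ω ξ) :
    MemLp ξ 2 (volume.restrict Ω) := by
  have hfinite : IsFiniteMeasure (volume.restrict (Ω : Set ℝ^N)) :=
    isFiniteMeasure_restrict.2 hΩ.measure_lt_top.ne
  obtain ⟨C, hC⟩ := hΩ.isCompact_closure.exists_bound_of_continuousOn hξ.1
  exact .of_bound ((hξ.1.mono subset_closure).aestronglyMeasurable Ω.isOpen.measurableSet) C
    (ae_restrict_of_forall_mem Ω.isOpen.measurableSet fun x hx ↦ hC x (subset_closure hx))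

/-- The Laplacian of test functions, as a linear map into `L²(Ω)`. -/
def laplLp (Ω : Opens ℝ^N) : 𝓓^{2}(Ω, ℝ) →ₗ[ℝ] Lp ℝ 2 (volume.restrict (Ω : Set ℝ^N)) where
  toFun ψ := (memLp_lapl_testFunction ψ).toLp
  map_add' ψ χ := by
    rw [← MemLp.toLp_add]
    exact MemLp.toLp_congr _ _ (.of_forall fun x ↦
      lapl_add ψ.contDiff.contDiffAt χ.contDiff.contDiffAt)
  map_smul' c ψ := by
    rw [RingHom.id_apply, ← MemLp.toLp_const_smul]
    exact MemLp.toLp_congr _ _ (.of_forall fun x ↦ lapl_const_smul c ψ.contDiff.contDiffAt)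

/-- The functional `ψ ↦ -∫ h ψ` on test functions. -/
def sourceDual {M : ℝ} (hh : AEStronglyMeasurable h (volume.restrict Ω))
    (hM : ∀ x ∈ Ω, |h x| ≤ M) : Module.Dual ℝ 𝓓^{2}(Ω, ℝ) where
  toFun ψ := -∫ x in Ω, h x * ψ x
  map_add' ψ χ := by
    rw [← neg_add, ← integral_add (integrable_mul_testFunction hh hM ψ)
      (integrable_mul_testFunction hh hM χ)]
    simp only [FunLike.coe_add, Pi.add_apply, mul_add]
  map_smul' c ψ := by
    simp only [FunLike.coe_smul, Pi.smul_apply, smul_eq_mul, RingHom.id_apply, mul_neg,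
      ← integral_const_mul, mul_left_comm]

theorem exists_isWeakSolution_abs_le_torsion {M : ℝ} (hΩ : Bornology.IsBounded (Ω : Set ℝ^N))
    (hξ : IsTorsionFn Ω ξ) (hh : AEStronglyMeasurable h (volume.restrict Ω)) (hM_nonneg : 0 ≤ M)
    (hM : ∀ x ∈ Ω, |h x| ≤ M) :
    ∃ w : ℝ^N → ℝ, IntegrableOn w Ω ∧ (∀ᵐ x ∂volume.restrict Ω, |w x| ≤ M * ξ x) ∧
      IsWeakSolution Ω w h := by
  have hfinite : IsFiniteMeasure (volume.restrict (Ω : Set ℝ^N)) :=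
    isFiniteMeasure_restrict.2 hΩ.measure_lt_top.ne
  have hρ : MemLp (fun x ↦ M * ξ x) 2 (volume.restrict Ω) :=
    (memLp_torsion hΩ hξ).const_mul M
  have hρ_nonneg : 0 ≤ hρ.toLp := by
    refine (Lp.coeFn_nonneg _).1 ?_
    filter_upwards [hρ.coeFn_toLp, ae_restrict_mem Ω.isOpen.measurableSet] with x hx hxΩ
    rw [hx]
    exact mul_nonneg hM_nonneg (hξ.2.2.1 x hxΩ)
  have hdom (ψ : 𝓓^{2}(Ω, ℝ)) : sourceDual hh hM ψ ≤ ⟪hρ.toLp, |laplLp Ω ψ|⟫_ℝ := by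
    refine (neg_integral_mul_testFunction_le hξ hh hM_nonneg hM ψ).trans_eq ?_
    rw [L2.inner_def, ← integral_const_mul]
    refine integral_congr_ae ?_
    filter_upwards [(memLp_lapl_testFunction ψ).coeFn_toLp, hρ.coeFn_toLp,
      Lp.coeFn_abs (laplLp Ω ψ)] with x hx hρx habs
    rw [habs, hρx, laplLp, LinearMap.coe_mk, AddHom.coe_mk, hx]
    simp only [RCLike.inner_apply, conj_trivial]
    ring
  obtain ⟨w, hwρ, hw⟩ := exists_lp_two_abs_le_forall_inner_eq (laplLp Ω) (sourceDual hh hM)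
    hρ_nonneg hdom
  refine ⟨w, (Lp.memLp w).integrable one_le_two, ?_, fun ψ ↦ ?_⟩
  · filter_upwards [(Lp.coeFn_le _ _).2 hwρ, Lp.coeFn_abs w, hρ.coeFn_toLp] with x hle habs hx
    rwa [habs, hx] at hle
  · rw [← setIntegral_mul_lapl_testFunction, ← setIntegral_mul_testFunction]
    refine Eq.trans ?_ (hw ψ)
    rw [L2.inner_def]
    refine integral_congr_ae ?_
    filter_upwards [(memLp_lapl_testFunction ψ).coeFn_toLp] with x hx
    simp [laplLp, hx, mul_comm]

end WeakSolution

section RadialProfile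

lemma contDiff_rpow_mul {n : ℕ∞} {F : ℝ → ℝ} (hF : ContDiff ℝ n F) {ε : ℝ} (hε : 0 < ε)
    (hF_left : ∀ t ≤ ε, F t = 0) (a : ℝ) : ContDiff ℝ n (fun t ↦ t ^ a * F t) := by
  refine contDiff_iff_contDiffAt.2 fun t ↦ ?_
  rcases lt_or_ge t ε with ht | ht
  · refine (contDiffAt_const (c := (0 : ℝ))).congr_of_eventuallyEq ?_
    filter_upwards [Iio_mem_nhds ht] with s hs
    rw [hF_left s hs.le, mul_zero]
  · exact (Real.contDiffAt_rpow_const_of_ne (hε.trans_le ht).ne').mul hF.contDiffAt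

lemma hasDerivAt_integral_self_mul_four {b : ℝ → ℝ} (hb : Continuous b) (t : ℝ) :
    HasDerivAt (fun t ↦ ∫ s in t..4 * t, b s) (4 * b (4 * t) - b t) t := by
  have hfour : HasDerivAt (fun t ↦ ∫ s in (0 : ℝ)..4 * t, b s) (b (4 * t) * (4 * 1)) t :=
    (hb.integral_hasStrictDerivAt 0 (4 * t)).hasDerivAt.comp t ((hasDerivAt_id t).const_mul 4)
  convert! hfour.sub (hb.integral_hasStrictDerivAt 0 t).hasDerivAt using 1
  · ext s
    exact (intervalIntegral.integral_interval_sub_left (hb.intervalIntegrable _ _)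
      (hb.intervalIntegrable _ _)).symm
  · ring

variable {N : ℕ} {e : ℝ → ℝ} {ε : ℝ}

lemma mul_deriv_rpow_mul_flux {Y : ℝ → ℝ} {t : ℝ} (ht : 0 < t)
    (hY : HasDerivAt Y (t ^ ((N : ℝ) / 2 - 1) * (e t / 4) -
      4 * ((4 * t) ^ ((N : ℝ) / 2 - 1) * (e (4 * t) / 4))) t) :
    4 * t * deriv (fun t ↦ t ^ (-((N : ℝ) / 2)) * Y t) t + 2 * N * (t ^ (-((N : ℝ) / 2)) * Y t) =
      e t - 2 ^ N * e (4 * t) := by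
  have hfour : (4 : ℝ) ^ ((N : ℝ) / 2 - 1) = 2 ^ N / 4 := by
    rw [rpow_sub (by norm_num), rpow_one, show (4 : ℝ) = 2 ^ (2 : ℝ) by norm_num,
      ← rpow_mul (by norm_num), mul_div_cancel₀ _ two_ne_zero, rpow_natCast]
  have hpow : t ^ ((N : ℝ) / 2) ≠ 0 := (rpow_pos_of_pos ht _).ne'
  rw [((Real.hasDerivAt_rpow_const (Or.inl ht.ne')).fun_mul hY).deriv,
    Real.mul_rpow (by norm_num) ht.le, hfour, rpow_sub ht, rpow_sub ht, rpow_neg ht.le, rpow_one]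
  field_simp
  ring

/- In the variable `t = ‖y‖²` the Laplacian of a radial function with derivative `q` equals
`4 t q' + 2 N q = 4 t ^ (1 - N / 2) (t ^ (N / 2) q)'`: `t ^ (N / 2) q` is found by integration. -/
lemma exists_radial_flux (he : Continuous e) (he_nonneg : ∀ t, 0 ≤ e t) (hε : 0 < ε)
    (he_left : ∀ t ≤ ε, e t = 0) (he_right : ∀ t, 1 ≤ t → e t = 0) :
    ∃ q : ℝ → ℝ, ContDiff ℝ 1 q ∧ (∀ t, q t ≤ 0) ∧ (∀ t, 1 ≤ t → q t = 0) ∧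
      ∀ t, 0 ≤ t → 4 * t * deriv q t + 2 * N * q t = e t - 2 ^ N * e (4 * t) := by
  let b : ℝ → ℝ := fun t ↦ t ^ ((N : ℝ) / 2 - 1) * (e t / 4)
  let Y : ℝ → ℝ := fun t ↦ -∫ s in t..4 * t, b s
  have hb : Continuous b := (contDiff_rpow_mul (n := 0) (contDiff_zero.2 (he.div_const 4)) hε
    (fun t ht ↦ by rw [he_left t ht, zero_div]) _).continuous
  have hY (t : ℝ) : HasDerivAt Y (b t - 4 * b (4 * t)) t := by
    simpa only [Y, neg_sub] using (hasDerivAt_integral_self_mul_four hb t).fun_neg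
  have hY_contDiff : ContDiff ℝ 1 Y := by
    refine contDiff_one_iff_deriv.2 ⟨fun t ↦ (hY t).differentiableAt, ?_⟩
    rw [funext fun t ↦ (hY t).deriv]
    fun_prop
  have hY_left (t : ℝ) (ht : t ≤ ε / 4) : Y t = 0 := by
    refine neg_eq_zero.2 (intervalIntegral.integral_zero_ae (.of_forall fun s hs ↦ ?_))
    simp only [b, he_left s (hs.2.trans (max_le (by linarith) (by linarith))), zero_div, mul_zero]
  have hY_right (t : ℝ) (ht : 1 ≤ t) : Y t = 0 := by
    refine neg_eq_zero.2 (intervalIntegral.integral_zero_ae (.of_forall fun s hs ↦ ?_))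
    rw [uIoc_of_le (by linarith)] at hs
    simp only [b, he_right s (ht.trans hs.1.le), zero_div, mul_zero]
  have hY_nonpos (t : ℝ) (ht : 0 ≤ t) : Y t ≤ 0 :=
    neg_nonpos.2 (intervalIntegral.integral_nonneg (by linarith) fun s hs ↦
      mul_nonneg (rpow_nonneg (ht.trans hs.1) _) (div_nonneg (he_nonneg s) (by norm_num)))
  refine ⟨fun t ↦ t ^ (-((N : ℝ) / 2)) * Y t,
    contDiff_rpow_mul hY_contDiff (ε := ε / 4) (by positivity) hY_left _, fun t ↦ ?_,
    fun t ht ↦ by simp only [hY_right t ht, mul_zero], fun t ht ↦ ?_⟩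
  · rcases le_total t (ε / 4) with h | h
    · simp only [hY_left t h, mul_zero, le_refl]
    · have ht : 0 ≤ t := by linarith
      exact mul_nonpos_of_nonneg_of_nonpos (rpow_nonneg ht _) (hY_nonpos t ht)
  · rcases ht.eq_or_lt with rfl | ht
    · simp [hY_left 0 (by positivity), he_left 0 hε.le]
    · exact mul_deriv_rpow_mul_flux ht (hY t)

lemma exists_radial_potential (he : Continuous e) (he_nonneg : ∀ t, 0 ≤ e t) (hε : 0 < ε)
    (he_left : ∀ t ≤ ε, e t = 0) (he_right : ∀ t, 1 ≤ t → e t = 0) :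
    ∃ k q q' : ℝ → ℝ, (∀ t, HasDerivAt k (q t) t) ∧ (∀ t, HasDerivAt q (q' t) t) ∧
      ContDiff ℝ 2 k ∧ (∀ t, 0 ≤ k t) ∧ (∀ t, 1 ≤ t → k t = 0) ∧
      ∀ t, 0 ≤ t → 4 * t * q' t + 2 * N * q t = e t - 2 ^ N * e (4 * t) := by
  obtain ⟨q, hq, hq_nonpos, hq_right, hq_eq⟩ :=
    exists_radial_flux (N := N) he he_nonneg hε he_left he_right
  have hk (t : ℝ) : HasDerivAt (fun t ↦ ∫ s in 1..t, q s) (q t) t :=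
    (hq.continuous.integral_hasStrictDerivAt 1 t).hasDerivAt
  have hk_right (t : ℝ) (ht : 1 ≤ t) : ∫ s in 1..t, q s = 0 := by
    refine intervalIntegral.integral_zero_ae (.of_forall fun s hs ↦ hq_right s ?_)
    rw [uIoc_of_le ht] at hs
    exact hs.1.le
  refine ⟨_, q, deriv q, hk, fun t ↦ (hq.differentiable one_ne_zero t).hasDerivAt, ?_, fun t ↦ ?_,
    hk_right, hq_eq⟩
  · refine (contDiff_succ_iff_deriv (n := 1)).2 ⟨fun t ↦ (hk t).differentiableAt, by simp, ?_⟩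
    rwa [funext fun t ↦ (hk t).deriv]
  · rcases le_total t 1 with ht | ht
    · rw [intervalIntegral.integral_symm, ← intervalIntegral.integral_neg]
      exact intervalIntegral.integral_nonneg ht fun s _ ↦ neg_nonneg.2 (hq_nonpos s)
    · exact (hk_right t ht).ge

end RadialProfile

section MeanValueKernel

variable {N : ℕ}

lemma lapl_comp_norm_sq {k k' k'' : ℝ → ℝ} (hk : ∀ t, HasDerivAt k (k' t) t)
    (hk' : ∀ t, HasDerivAt k' (k'' t) t) (y : ℝ^N) :
    lapl (fun y : ℝ^N ↦ k (‖y‖ ^ 2)) y = 4 * ‖y‖ ^ 2 * k'' (‖y‖ ^ 2) + 2 * N * k' (‖y‖ ^ 2) := by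
  have hgrad : ∑ i, partialDeriv i (fun y : ℝ^N ↦ ‖y‖ ^ 2) y ^ 2 = 4 * ‖y‖ ^ 2 := by
    simp only [partialDeriv_norm_sq]
    simp only [EuclideanSpace.norm_sq_eq, Finset.mul_sum, mul_pow, Real.norm_eq_abs, sq_abs]
    norm_num
  rw [lapl_comp hk hk' (contDiff_norm_sq ℝ).contDiffAt, hgrad, lapl_norm_sq]
  ring

/-- A smooth averaging kernel `η` on the unit ball together with a potential `κ` of the difference
between `η` and its dilate to the ball of radius `1 / 2`. Pairing `-Δw = h` with rescaled copies of
`κ` compares the `η`-averages of `w` at consecutive dyadic scales, a smooth form of the mean value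
property. -/
structure MeanValueKernel (N : ℕ) where
  η : ℝ^N → ℝ
  κ : ℝ^N → ℝ
  contDiff_η : ContDiff ℝ 2 η
  η_nonneg : ∀ y, 0 ≤ η y
  η_eq_zero : ∀ y, 1 ≤ ‖y‖ → η y = 0
  η_pos : ∀ y, 1 / 4 < ‖y‖ → ‖y‖ < 1 → 0 < η y
  integral_η : ∫ y, η y = 1
  contDiff_κ : ContDiff ℝ 2 κ
  κ_nonneg : ∀ y, 0 ≤ κ y
  κ_eq_zero : ∀ y, 1 ≤ ‖y‖ → κ y = 0
  lapl_κ : ∀ y, lapl κ y = η y - 2 ^ N * η ((2 : ℝ) • y)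

lemma hasCompactSupport_of_eq_zero_of_one_le_norm {g : ℝ^N → ℝ} (hg : ∀ y, 1 ≤ ‖y‖ → g y = 0) :
    HasCompactSupport g :=
  .of_support_subset_isCompact (isCompact_closedBall 0 1) fun y hy ↦ by
    rw [mem_closedBall_zero_iff]
    exact le_of_not_ge fun h ↦ hy (hg y h)

theorem nonempty_meanValueKernel (hN : 1 ≤ N) : Nonempty (MeanValueKernel N) := by
  obtain ⟨e, he_support, he, he_range⟩ :=
    (isOpen_Ioo (a := (1 / 16 : ℝ)) (b := 1)).exists_contDiff_support_eq (n := 2)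
  have he_nonneg (t : ℝ) : 0 ≤ e t := (he_range (mem_range_self t)).1
  have he_zero (t : ℝ) (ht : t ∉ Ioo (1 / 16) 1) : e t = 0 := by
    rwa [← he_support, Function.notMem_support] at ht
  have he_left (t : ℝ) (ht : t ≤ 1 / 16) : e t = 0 := he_zero t fun h ↦ h.1.not_ge ht
  have he_right (t : ℝ) (ht : 1 ≤ t) : e t = 0 := he_zero t fun h ↦ h.2.not_ge ht
  have he_pos (y : ℝ^N) (hy : 1 / 4 < ‖y‖) (hy' : ‖y‖ < 1) : 0 < e (‖y‖ ^ 2) :=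
    (he_nonneg _).lt_of_ne' (he_support.ge ⟨by nlinarith, by nlinarith⟩)
  obtain ⟨k, q, q', hk, hq, hk_contDiff, hk_nonneg, hk_right, hk_eq⟩ :=
    exists_radial_potential (N := N) he.continuous he_nonneg (by norm_num) he_left he_right
  have he_comp : ContDiff ℝ 2 (fun y : ℝ^N ↦ e (‖y‖ ^ 2)) := he.comp (contDiff_norm_sq ℝ)
  have he_supp : HasCompactSupport fun y : ℝ^N ↦ e (‖y‖ ^ 2) :=
    hasCompactSupport_of_eq_zero_of_one_le_norm fun y hy ↦ he_right _ (one_le_pow₀ hy)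
  let z : ℝ^N := EuclideanSpace.single ⟨0, hN⟩ (1 / 2)
  have hz : ‖z‖ = 1 / 2 := by simp [z]
  have hm : 0 < ∫ y : ℝ^N, e (‖y‖ ^ 2) :=
    he_comp.continuous.integral_pos_of_hasCompactSupport_nonneg_nonzero he_supp
      (fun y ↦ he_nonneg _) (x := z) (he_pos z (by norm_num [hz]) (by norm_num [hz])).ne'
  set m := ∫ y : ℝ^N, e (‖y‖ ^ 2)
  have hm_inv : 0 < m⁻¹ := inv_pos.2 hm
  refine ⟨⟨fun y ↦ m⁻¹ * e (‖y‖ ^ 2), fun y ↦ m⁻¹ * k (‖y‖ ^ 2), contDiff_const.mul he_comp,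
    fun y ↦ mul_nonneg hm_inv.le (he_nonneg _),
    fun y hy ↦ by rw [he_right _ (one_le_pow₀ hy), mul_zero],
    fun y hy hy' ↦ mul_pos hm_inv (he_pos y hy hy'),
    by rw [integral_const_mul, inv_mul_cancel₀ hm.ne'],
    contDiff_const.mul (hk_contDiff.comp (contDiff_norm_sq ℝ)),
    fun y ↦ mul_nonneg hm_inv.le (hk_nonneg _),
    fun y hy ↦ by rw [hk_right _ (one_le_pow₀ hy), mul_zero], fun y ↦ ?_⟩⟩
  have hdouble : ‖(2 : ℝ) • y‖ ^ 2 = 4 * ‖y‖ ^ 2 := by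
    rw [norm_smul, mul_pow]
    norm_num
  rw [lapl_comp_norm_sq (k := fun t ↦ m⁻¹ * k t) (fun t ↦ (hk t).const_mul _)
    (fun t ↦ (hq t).const_mul _), hdouble]
  linear_combination m⁻¹ * hk_eq (‖y‖ ^ 2) (by positivity)

end MeanValueKernel

section Convolution

variable {G F : Type*} [NormedAddCommGroup G] [MeasurableSpace G] {μ : Measure G}
  [NormedAddCommGroup F] [NormedSpace ℝ F] {g : G → ℝ} {h : G → F} {M : ℝ}

lemma norm_convolution_lsmul_le (hg : Integrable g μ) (hM : ∀ x, ‖h x‖ ≤ M) (x : G) :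
    ‖(g ⋆[ContinuousLinearMap.lsmul ℝ ℝ, μ] h) x‖ ≤ (∫ y, |g y| ∂μ) * M := by
  rw [convolution_def, ← integral_mul_const]
  refine norm_integral_le_of_norm_le (hg.abs.mul_const M) (.of_forall fun y ↦ ?_)
  rw [ContinuousLinearMap.lsmul_apply, norm_smul]
  exact mul_le_mul_of_nonneg_left (hM _) (norm_nonneg _)

lemma norm_fderiv_convolution_lsmul_le [NormedSpace ℝ G] [FiniteDimensional ℝ G] [BorelSpace G]
    [μ.IsAddHaarMeasure] (hg_supp : HasCompactSupport g) (hg : ContDiff ℝ 1 g)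
    (hh : LocallyIntegrable h μ) (hM : ∀ x, ‖h x‖ ≤ M) (x : G) :
    ‖fderiv ℝ (g ⋆[ContinuousLinearMap.lsmul ℝ ℝ, μ] h) x‖ ≤ (∫ y, ‖fderiv ℝ g y‖ ∂μ) * M := by
  have hconv := hg_supp.hasFDerivAt_convolution_left (ContinuousLinearMap.lsmul ℝ ℝ) hg hh x
  rw [hconv.fderiv, convolution_def, ← integral_mul_const]
  have hfderiv : Integrable (fderiv ℝ g) μ :=
    (hg.continuous_fderiv one_ne_zero).integrable_of_hasCompactSupport (hg_supp.fderiv ℝ)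
  have hlsmul := (ContinuousLinearMap.norm_precompL_le G _).trans
    (ContinuousLinearMap.opNorm_lsmul_le (𝕜 := ℝ) (R := ℝ) (E := F))
  refine norm_integral_le_of_norm_le (hfderiv.norm.mul_const M) (.of_forall fun y ↦ ?_)
  refine (ContinuousLinearMap.le_opNorm₂ _ _ _).trans ?_
  exact mul_le_mul (mul_le_of_le_one_left (norm_nonneg _) hlsmul) (hM _) (norm_nonneg _)
    (norm_nonneg _)

end Convolution

section DyadicDilate

variable {N : ℕ} {g : ℝ^N → ℝ}

/-- The `L¹`-normalized dilate of `g` by the factor `2 ^ n`; it carries a kernel on the unit ball to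
a kernel of the same mass on the ball of radius `2 ^ (-n)`. -/
def dyadicDilate (n : ℕ) (g : ℝ^N → ℝ) (y : ℝ^N) : ℝ := (2 ^ n) ^ N * g ((2 : ℝ) ^ n • y)

lemma integral_dyadicDilate (n : ℕ) (g : ℝ^N → ℝ) : ∫ y, dyadicDilate n g y = ∫ y, g y := by
  simp only [dyadicDilate, integral_const_mul, Measure.integral_comp_smul,
    finrank_euclideanSpace_fin, smul_eq_mul]
  rw [abs_of_pos (by positivity), mul_inv_cancel_left₀ (by positivity)]

lemma abs_dyadicDilate (n : ℕ) (g : ℝ^N → ℝ) (y : ℝ^N) :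
    |dyadicDilate n g y| = dyadicDilate n (fun y ↦ |g y|) y := by
  rw [dyadicDilate, abs_mul, abs_of_pos (by positivity), dyadicDilate]

lemma dyadicDilate_nonneg (n : ℕ) (hg : ∀ y, 0 ≤ g y) (y : ℝ^N) : 0 ≤ dyadicDilate n g y :=
  mul_nonneg (by positivity) (hg _)

lemma contDiff_dyadicDilate {m : WithTop ℕ∞} (n : ℕ) (hg : ContDiff ℝ m g) :
    ContDiff ℝ m (dyadicDilate n g) :=
  contDiff_const.mul (hg.comp (contDiff_const_smul _))

lemma norm_fderiv_dyadicDilate (n : ℕ) (hg : Differentiable ℝ g) (y : ℝ^N) :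
    ‖fderiv ℝ (dyadicDilate n g) y‖ = 2 ^ n * dyadicDilate n (fun y ↦ ‖fderiv ℝ g y‖) y := by
  have hdilate : HasFDerivAt (fun y : ℝ^N ↦ (2 : ℝ) ^ n • y)
      ((2 : ℝ) ^ n • ContinuousLinearMap.id ℝ ℝ^N) y := (hasFDerivAt_id y).fun_const_smul _
  have hfderiv : HasFDerivAt (dyadicDilate n g) _ y :=
    (((hg _).hasFDerivAt).comp y hdilate).const_mul (((2 : ℝ) ^ n) ^ N)
  rw [hfderiv.fderiv, ContinuousLinearMap.comp_smul, ContinuousLinearMap.comp_id, norm_smul,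
    norm_smul, norm_pow, norm_pow, norm_two, dyadicDilate]
  ring

lemma dyadicDilate_eq_zero (hg : ∀ y, 1 ≤ ‖y‖ → g y = 0) {n : ℕ} {y : ℝ^N}
    (hy : (1 / 2) ^ n ≤ ‖y‖) : dyadicDilate n g y = 0 := by
  rw [dyadicDilate, hg, mul_zero]
  rw [norm_smul, norm_pow, norm_two]
  calc (1 : ℝ) = 2 ^ n * (1 / 2) ^ n := by rw [← mul_pow]; norm_num
    _ ≤ 2 ^ n * ‖y‖ := by gcongr

lemma support_dyadicDilate_subset (hg : ∀ y, 1 ≤ ‖y‖ → g y = 0) (n : ℕ) :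
    Function.support (dyadicDilate n g) ⊆ Metric.ball 0 ((1 / 2) ^ n) := fun y hy ↦ by
  rw [mem_ball_zero_iff]
  exact lt_of_not_ge fun h ↦ hy (dyadicDilate_eq_zero hg h)

lemma hasCompactSupport_dyadicDilate (hg : ∀ y, 1 ≤ ‖y‖ → g y = 0) (n : ℕ) :
    HasCompactSupport (dyadicDilate n g) :=
  .of_support_subset_isCompact (isCompact_closedBall 0 ((1 / 2) ^ n))
    ((support_dyadicDilate_subset hg n).trans Metric.ball_subset_closedBall)

lemma integrable_dyadicDilate (hg : Continuous g) (hg_zero : ∀ y, 1 ≤ ‖y‖ → g y = 0) (n : ℕ) :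
    Integrable (dyadicDilate n g) :=
  (contDiff_dyadicDilate n (contDiff_zero.2 hg)).continuous.integrable_of_hasCompactSupport
    (hasCompactSupport_dyadicDilate hg_zero n)

lemma integrable_dyadicDilate_sub_mul (hg : Continuous g) (hg_zero : ∀ y, 1 ≤ ‖y‖ → g y = 0)
    {w : ℝ^N → ℝ} (hw : LocallyIntegrable w) (n : ℕ) (x : ℝ^N) :
    Integrable fun z ↦ dyadicDilate n g (x - z) * w z :=
  ((hasCompactSupport_dyadicDilate hg_zero n).convolutionExists_left
    (ContinuousLinearMap.lsmul ℝ ℝ) (contDiff_dyadicDilate n (contDiff_zero.2 hg)).continuous hw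
    x).integrable_swap

lemma contDiff_dyadicDilate_convolution {F : Type*} [NormedAddCommGroup F] [NormedSpace ℝ F]
    {m : ℕ∞} (hg : ContDiff ℝ m g) (hg_zero : ∀ y, 1 ≤ ‖y‖ → g y = 0) {h : ℝ^N → F}
    (hh : LocallyIntegrable h) (n : ℕ) : ContDiff ℝ m (dyadicDilate n g ⋆ h) :=
  (hasCompactSupport_dyadicDilate hg_zero n).contDiff_convolution_left _
    (contDiff_dyadicDilate n hg) hh

lemma norm_fderiv_dyadicDilate_convolution_le {F : Type*} [NormedAddCommGroup F] [NormedSpace ℝ F]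
    (hg : ContDiff ℝ 1 g) (hg_zero : ∀ y, 1 ≤ ‖y‖ → g y = 0) {h : ℝ^N → F}
    (hh : LocallyIntegrable h) {M : ℝ} (hM : ∀ x, ‖h x‖ ≤ M) (n : ℕ) (x : ℝ^N) :
    ‖fderiv ℝ (dyadicDilate n g ⋆ h) x‖ ≤ 2 ^ n * (∫ y, ‖fderiv ℝ g y‖) * M := by
  refine (norm_fderiv_convolution_lsmul_le (hasCompactSupport_dyadicDilate hg_zero n)
    (contDiff_dyadicDilate n hg) hh hM x).trans_eq ?_
  simp only [norm_fderiv_dyadicDilate n (hg.differentiable one_ne_zero)]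
  rw [integral_const_mul, integral_dyadicDilate]

end DyadicDilate

section DyadicPotential

variable {N : ℕ} {F : Type*} [NormedAddCommGroup F] [NormedSpace ℝ F] {κ : ℝ^N → ℝ} {h : ℝ^N → F}
  {M : ℝ}

/-- The contribution of the scale `2 ^ (-k)` to `dyadicPotential`. -/
def dyadicTerm (κ : ℝ^N → ℝ) (k : ℕ) (h : ℝ^N → F) (x : ℝ^N) : F :=
  (1 / 4 : ℝ) ^ k • (dyadicDilate k κ ⋆ h) x

/-- The part at scales at most `2 ^ (-n)` of a potential of `h`, written as a sum of convolutions
with rescaled copies of `κ`; it plays the role of the Newtonian potential. -/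
def dyadicPotential (κ : ℝ^N → ℝ) (n : ℕ) (h : ℝ^N → F) (x : ℝ^N) : F :=
  ∑' k, dyadicTerm κ (n + k) h x

lemma summable_half_pow_add_mul (n : ℕ) (c : ℝ) :
    Summable fun k ↦ (1 / 2 : ℝ) ^ (n + k) * c := by
  simp_rw [pow_add]
  exact (summable_geometric_two.mul_left _).mul_right _

lemma tsum_half_pow_add_mul_le (n : ℕ) {c : ℝ} (hc : 0 ≤ c) :
    ∑' k, (1 / 2 : ℝ) ^ (n + k) * c ≤ 2 * c := by
  simp_rw [pow_add]
  rw [tsum_mul_right, tsum_mul_left, tsum_geometric_two]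
  have hpow : (1 / 2 : ℝ) ^ n ≤ 1 := pow_le_one₀ (by norm_num) (by norm_num)
  nlinarith

lemma norm_dyadicTerm_le (hκ : Continuous κ) (hκ_zero : ∀ y, 1 ≤ ‖y‖ → κ y = 0)
    (hM : ∀ x, ‖h x‖ ≤ M) (k : ℕ) (x : ℝ^N) :
    ‖dyadicTerm κ k h x‖ ≤ (1 / 2) ^ k * ((∫ y, |κ y|) * M) := by
  have hbound := norm_convolution_lsmul_le (integrable_dyadicDilate hκ hκ_zero k) hM x
  simp only [abs_dyadicDilate, integral_dyadicDilate] at hbound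
  rw [dyadicTerm, norm_smul, norm_pow]
  refine mul_le_mul ?_ hbound (norm_nonneg _) (by positivity)
  exact pow_le_pow_left₀ (by positivity) (by norm_num) _

lemma summable_dyadicTerm [CompleteSpace F] (hκ : Continuous κ)
    (hκ_zero : ∀ y, 1 ≤ ‖y‖ → κ y = 0) (hM : ∀ x, ‖h x‖ ≤ M) (n : ℕ) (x : ℝ^N) :
    Summable fun k ↦ dyadicTerm κ (n + k) h x :=
  .of_norm_bounded (summable_half_pow_add_mul n _) fun _ ↦ norm_dyadicTerm_le hκ hκ_zero hM _ x

lemma contDiff_dyadicTerm (hκ : ContDiff ℝ 1 κ) (hκ_zero : ∀ y, 1 ≤ ‖y‖ → κ y = 0)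
    (hh : LocallyIntegrable h) (k : ℕ) : ContDiff ℝ 1 (dyadicTerm κ k h) :=
  contDiff_const.smul (contDiff_dyadicDilate_convolution (m := 1) hκ hκ_zero hh k)

lemma norm_fderiv_dyadicTerm_le (hκ : ContDiff ℝ 1 κ) (hκ_zero : ∀ y, 1 ≤ ‖y‖ → κ y = 0)
    (hh : LocallyIntegrable h) (hM : ∀ x, ‖h x‖ ≤ M) (k : ℕ) (x : ℝ^N) :
    ‖fderiv ℝ (dyadicTerm κ k h) x‖ ≤ (1 / 2) ^ k * ((∫ y, ‖fderiv ℝ κ y‖) * M) := by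
  have hdiff : DifferentiableAt ℝ (dyadicDilate k κ ⋆ h) x :=
    (contDiff_dyadicDilate_convolution (m := 1) hκ hκ_zero hh k).differentiable one_ne_zero x
  have hfderiv : fderiv ℝ (dyadicTerm κ k h) x =
      (1 / 4 : ℝ) ^ k • fderiv ℝ (dyadicDilate k κ ⋆ h) x := fderiv_fun_const_smul hdiff _
  rw [hfderiv, norm_smul, Real.norm_of_nonneg (by positivity)]
  calc (1 / 4) ^ k * ‖fderiv ℝ (dyadicDilate k κ ⋆ h) x‖
      ≤ (1 / 4) ^ k * (2 ^ k * (∫ y, ‖fderiv ℝ κ y‖) * M) := by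
        gcongr
        exact norm_fderiv_dyadicDilate_convolution_le hκ hκ_zero hh hM k x
    _ = (1 / 4 * 2) ^ k * ((∫ y, ‖fderiv ℝ κ y‖) * M) := by rw [mul_pow]; ring
    _ = (1 / 2) ^ k * ((∫ y, ‖fderiv ℝ κ y‖) * M) := by norm_num

lemma dyadicPotential_congr (hκ_zero : ∀ y, 1 ≤ ‖y‖ → κ y = 0) {h' : ℝ^N → F} {n : ℕ} {x : ℝ^N}
    (h_eq : EqOn h h' (Metric.closedBall x ((1 / 2) ^ n))) :
    dyadicPotential κ n h x = dyadicPotential κ n h' x := by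
  refine tsum_congr fun k ↦ congrArg _ (integral_congr_ae (.of_forall fun y ↦ ?_))
  by_cases hy : y ∈ Metric.ball 0 ((1 / 2) ^ (n + k))
  · have hxy : x - y ∈ Metric.closedBall x ((1 / 2) ^ n) := by
      rw [mem_ball_zero_iff] at hy
      rw [Metric.mem_closedBall, dist_eq_norm, sub_sub_cancel_left, norm_neg]
      exact hy.le.trans (pow_le_pow_of_le_one (by norm_num) (by norm_num) (Nat.le_add_right n k))
    simp only [h_eq hxy]
  · rw [mem_ball_zero_iff, not_lt] at hy
    simp only [dyadicDilate_eq_zero hκ_zero hy, map_zero, zero_apply]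

variable [CompleteSpace F]

lemma hasFDerivAt_dyadicPotential (hκ : ContDiff ℝ 1 κ) (hκ_zero : ∀ y, 1 ≤ ‖y‖ → κ y = 0)
    (hh : LocallyIntegrable h) (hM : ∀ x, ‖h x‖ ≤ M) (n : ℕ) (x : ℝ^N) :
    HasFDerivAt (dyadicPotential κ n h) (∑' k, fderiv ℝ (dyadicTerm κ (n + k) h) x) x :=
  hasFDerivAt_tsum (summable_half_pow_add_mul n _)
    (fun _ y ↦ ((contDiff_dyadicTerm hκ hκ_zero hh _).differentiable one_ne_zero y).hasFDerivAt)
    (fun _ y ↦ norm_fderiv_dyadicTerm_le hκ hκ_zero hh hM _ y)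
    (summable_dyadicTerm hκ.continuous hκ_zero hM n 0) x

lemma contDiff_one_dyadicPotential (hκ : ContDiff ℝ 1 κ) (hκ_zero : ∀ y, 1 ≤ ‖y‖ → κ y = 0)
    (hh : LocallyIntegrable h) (hM : ∀ x, ‖h x‖ ≤ M) (n : ℕ) :
    ContDiff ℝ 1 (dyadicPotential κ n h) := by
  have hfderiv := hasFDerivAt_dyadicPotential hκ hκ_zero hh hM n
  refine contDiff_one_iff_fderiv.2 ⟨fun x ↦ (hfderiv x).differentiableAt, ?_⟩
  rw [funext fun x ↦ (hfderiv x).fderiv]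
  exact continuous_tsum
    (fun k ↦ (contDiff_dyadicTerm hκ hκ_zero hh _).continuous_fderiv one_ne_zero)
    (summable_half_pow_add_mul n _) fun k ↦ norm_fderiv_dyadicTerm_le hκ hκ_zero hh hM _

lemma norm_fderiv_dyadicPotential_le (hκ : ContDiff ℝ 1 κ) (hκ_zero : ∀ y, 1 ≤ ‖y‖ → κ y = 0)
    (hh : LocallyIntegrable h) (hM : ∀ x, ‖h x‖ ≤ M) (n : ℕ) (x : ℝ^N) :
    ‖fderiv ℝ (dyadicPotential κ n h) x‖ ≤ 2 * ((∫ y, ‖fderiv ℝ κ y‖) * M) := by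
  have hM_nonneg : 0 ≤ M := (norm_nonneg _).trans (hM 0)
  rw [(hasFDerivAt_dyadicPotential hκ hκ_zero hh hM n x).fderiv]
  exact (tsum_of_norm_bounded (summable_half_pow_add_mul n _).hasSum
    fun _ ↦ norm_fderiv_dyadicTerm_le hκ hκ_zero hh hM _ x).trans
    (tsum_half_pow_add_mul_le n (by positivity))

lemma contDiff_two_dyadicPotential (hκ : ContDiff ℝ 1 κ) (hκ_zero : ∀ y, 1 ≤ ‖y‖ → κ y = 0)
    (hh : ContDiff ℝ 1 h) (hh_supp : HasCompactSupport h) (n : ℕ) :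
    ContDiff ℝ 2 (dyadicPotential κ n h) := by
  have hfderiv : Continuous (fderiv ℝ h) := hh.continuous_fderiv one_ne_zero
  obtain ⟨M, hM⟩ := hh_supp.exists_bound_of_continuous hh.continuous
  obtain ⟨M', hM'⟩ := (hh_supp.fderiv ℝ).exists_bound_of_continuous hfderiv
  have hpotential (x : ℝ^N) :
      HasFDerivAt (dyadicPotential κ n h) (dyadicPotential κ n (fderiv ℝ h) x) x :=
    hasFDerivAt_tsum (summable_half_pow_add_mul n _)
      (fun k y ↦ (hh_supp.hasFDerivAt_convolution_right (ContinuousLinearMap.lsmul ℝ ℝ)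
        (contDiff_dyadicDilate (n + k) hκ).continuous.locallyIntegrable hh y).fun_const_smul _)
      (fun k y ↦ norm_dyadicTerm_le hκ.continuous hκ_zero hM' (n + k) y)
      (summable_dyadicTerm hκ.continuous hκ_zero hM n 0) x
  refine (contDiff_succ_iff_fderiv (n := 1)).2 ⟨fun x ↦ (hpotential x).differentiableAt,
    by simp, ?_⟩
  rw [funext fun x ↦ (hpotential x).fderiv]
  exact contDiff_one_dyadicPotential hκ hκ_zero hfderiv.locallyIntegrable hM' n

end DyadicPotential

section MeanValue

namespace MeanValueKernel

variable {N : ℕ} (K : MeanValueKernel N) {Ω : Opens ℝ^N} {w h : ℝ^N → ℝ} {M : ℝ} {n : ℕ} {x : ℝ^N}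

/-- The average of `w` over the ball of radius `2 ^ (-n)`, weighted by a dilate of `η`. -/
def average (n : ℕ) (w : ℝ^N → ℝ) : ℝ^N → ℝ := dyadicDilate n K.η ⋆ w

/-- The limit of the averages of `w` at small scales. For a weak solution `w` of `-Δw = h` this is
the representative of `w` for which pointwise statements hold. -/
def limitAverage (w : ℝ^N → ℝ) (x : ℝ^N) : ℝ := limUnder atTop fun n ↦ K.average n w x

lemma average_eq_integral (n : ℕ) (w : ℝ^N → ℝ) (x : ℝ^N) :
    K.average n w x = ∫ z, dyadicDilate n K.η (x - z) * w z :=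
  convolution_lsmul_swap

lemma integral_dyadicDilate_η_sub (n : ℕ) (x : ℝ^N) : ∫ z, dyadicDilate n K.η (x - z) = 1 := by
  rw [integral_sub_left_eq_self (dyadicDilate n K.η) volume x, integral_dyadicDilate, K.integral_η]

lemma contDiff_average (n : ℕ) (hw : LocallyIntegrable w) : ContDiff ℝ 2 (K.average n w) :=
  contDiff_dyadicDilate_convolution (m := 2) K.contDiff_η K.η_eq_zero hw n

lemma support_κ_comp_subset (n : ℕ) (x : ℝ^N) :
    Function.support (fun z ↦ K.κ ((2 : ℝ) ^ n • (x - z))) ⊆ Metric.closedBall x ((1 / 2) ^ n) := by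
  intro z hz
  have hxz : x - z ∈ Metric.ball 0 ((1 / 2) ^ n) :=
    support_dyadicDilate_subset K.κ_eq_zero n (mul_ne_zero (by positivity) hz)
  rw [mem_ball_zero_iff, ← dist_eq_norm, dist_comm] at hxz
  exact hxz.le

/-- The copy of `κ` rescaled to a ball compactly contained in `Ω`, as a test function. -/
def testFunction (hx : Metric.closedBall x ((1 / 2) ^ n) ⊆ Ω) : 𝓓^{2}(Ω, ℝ) where
  toFun z := K.κ ((2 : ℝ) ^ n • (x - z))
  contDiff' := K.contDiff_κ.comp ((contDiff_const_smul ((2 : ℝ) ^ n)).comp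
    (contDiff_const.sub contDiff_id))
  hasCompactSupport' :=
    .of_support_subset_isCompact (isCompact_closedBall _ _) (K.support_κ_comp_subset n x)
  tsupport_subset' :=
    (closure_minimal (K.support_κ_comp_subset n x) Metric.isClosed_closedBall).trans hx

lemma lapl_testFunction (hx : Metric.closedBall x ((1 / 2) ^ n) ⊆ Ω) (z : ℝ^N) :
    (1 / 4) ^ n * (2 ^ n) ^ N * lapl (K.testFunction hx) z =
      dyadicDilate n K.η (x - z) - dyadicDilate (n + 1) K.η (x - z) := by
  have hpow : (1 / 4 : ℝ) ^ n * (2 ^ n) ^ 2 = 1 := by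
    rw [← pow_mul, mul_comm n 2, pow_mul, ← mul_pow]
    norm_num
  have hlapl : lapl (K.testFunction hx) z = (2 ^ n) ^ 2 * lapl K.κ ((2 : ℝ) ^ n • (x - z)) :=
    lapl_comp_const_smul_const_sub K.contDiff_κ _ _ _
  rw [hlapl, K.lapl_κ, smul_smul, ← pow_succ', dyadicDilate, dyadicDilate, pow_succ (2 : ℝ) n,
    mul_pow]
  linear_combination (2 ^ n) ^ N * (K.η ((2 : ℝ) ^ n • (x - z)) -
    2 ^ N * K.η ((2 ^ n * 2 : ℝ) • (x - z))) * hpow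

theorem average_succ_sub_average (hw : IsWeakSolution Ω w h) (hw_int : LocallyIntegrable w)
    (hx : Metric.closedBall x ((1 / 2) ^ n) ⊆ Ω) :
    K.average (n + 1) w x - K.average n w x = dyadicTerm K.κ n h x := by
  have hmul_int (k : ℕ) : Integrable fun z ↦ dyadicDilate k K.η (x - z) * w z :=
    integrable_dyadicDilate_sub_mul K.contDiff_η.continuous K.η_eq_zero hw_int k x
  calc K.average (n + 1) w x - K.average n w x
      = ∫ z, -((1 / 4) ^ n * (2 ^ n) ^ N) * (w z * lapl (K.testFunction hx) z) := by
        rw [average_eq_integral, average_eq_integral, ← integral_sub (hmul_int _) (hmul_int _)]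
        congr with z
        linear_combination w z * K.lapl_testFunction hx z
    _ = (1 / 4) ^ n * ∫ z, (2 ^ n) ^ N * (h z * K.testFunction hx z) := by
        rw [integral_const_mul, hw, integral_const_mul]
        ring
    _ = dyadicTerm K.κ n h x := by
        rw [dyadicTerm, convolution_lsmul_swap, smul_eq_mul]
        congr with z
        rw [dyadicDilate, smul_eq_mul, mul_assoc, mul_comm (h z)]
        rfl

theorem tendsto_average (hw : IsWeakSolution Ω w h) (hw_int : LocallyIntegrable w)
    (hM : ∀ x, ‖h x‖ ≤ M) (hx : Metric.closedBall x ((1 / 2) ^ n) ⊆ Ω) :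
    Tendsto (fun k ↦ K.average k w x) atTop (𝓝 (K.average n w x + dyadicPotential K.κ n h x)) := by
  rw [← tendsto_add_atTop_iff_nat n]
  have hsum (k : ℕ) : K.average (k + n) w x =
      K.average n w x + ∑ i ∈ Finset.range k, dyadicTerm K.κ (n + i) h x := by
    have hstep (i : ℕ) : dyadicTerm K.κ (n + i) h x =
        K.average (n + (i + 1)) w x - K.average (n + i) w x :=
      (K.average_succ_sub_average hw hw_int ((Metric.closedBall_subset_closedBall
        (pow_le_pow_of_le_one (by norm_num) (by norm_num) (Nat.le_add_right n i))).trans hx)).symm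
    simp only [hstep]
    rw [Finset.sum_range_sub fun i ↦ K.average (n + i) w x, add_zero, add_sub_cancel, add_comm k]
  simp only [hsum]
  exact ((summable_dyadicTerm K.contDiff_κ.continuous K.κ_eq_zero hM n x).hasSum.tendsto_sum_nat
    ).const_add _

theorem limitAverage_eq (hw : IsWeakSolution Ω w h) (hw_int : LocallyIntegrable w)
    (hM : ∀ x, ‖h x‖ ≤ M) (hx : Metric.closedBall x ((1 / 2) ^ n) ⊆ Ω) :
    K.limitAverage w x = K.average n w x + dyadicPotential K.κ n h x :=
  (K.tendsto_average hw hw_int hM hx).limUnder_eq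

lemma dyadicDilate_η_le {C : ℝ} (hC : ∀ y, ‖K.η y‖ ≤ C) (n : ℕ) (x y : ℝ^N) :
    |dyadicDilate n K.η y| ≤ C * volume.real (Metric.closedBall (0 : ℝ^N) 1) /
      volume.real (Metric.closedBall x ((1 / 2) ^ n)) := by
  have hvol : 0 < volume.real (Metric.closedBall (0 : ℝ^N) 1) :=
    ENNReal.toReal_pos (Metric.measure_closedBall_pos _ _ one_pos).ne' measure_closedBall_lt_top.ne
  rw [Measure.addHaar_real_closedBall' _ x (r := (1 / 2) ^ n) (by positivity),
    finrank_euclideanSpace_fin, mul_div_mul_right _ _ hvol.ne', abs_dyadicDilate, dyadicDilate,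
    one_div, inv_pow, inv_pow, div_inv_eq_mul, mul_comm]
  exact mul_le_mul_of_nonneg_right (hC _) (by positivity)

theorem ae_tendsto_average (hw : LocallyIntegrable w) :
    ∀ᵐ x, Tendsto (fun n ↦ K.average n w x) atTop (𝓝 (w x)) := by
  obtain ⟨C, hC⟩ := (hasCompactSupport_of_eq_zero_of_one_le_norm K.η_eq_zero
    ).exists_bound_of_continuous K.contDiff_η.continuous
  have hradius : Tendsto (fun n : ℕ ↦ (1 / 2 : ℝ) ^ n) atTop (𝓝[>] 0) :=
    tendsto_nhdsWithin_iff.2 ⟨tendsto_pow_atTop_nhds_zero_of_lt_one (by norm_num) (by norm_num),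
      .of_forall fun n ↦ mem_Ioi.2 (pow_pos one_half_pos n)⟩
  filter_upwards [(Besicovitch.vitaliFamily volume).ae_tendsto_average_norm_sub hw] with x hx
  simp only [average_eq_integral]
  refine tendsto_integral_smul_of_tendsto_average_norm_sub
    (a := fun n ↦ Metric.closedBall x ((1 / 2 : ℝ) ^ n)) _
    ((hx.comp (Besicovitch.tendsto_filterAt volume x)).comp hradius)
    (.of_forall fun n ↦ hw.integrableOn_isCompact (isCompact_closedBall _ _))
    (by simp only [integral_dyadicDilate_η_sub, tendsto_const_nhds])
    (.of_forall fun n z hz ↦ ?_) (.of_forall fun n z ↦ K.dyadicDilate_η_le hC n x _)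
  have hxz : x - z ∈ Metric.ball 0 ((1 / 2) ^ n) := support_dyadicDilate_subset K.η_eq_zero n hz
  rw [mem_ball_zero_iff, ← dist_eq_norm, dist_comm] at hxz
  exact hxz.le

theorem limitAverage_ae_eq (hw : LocallyIntegrable w) : K.limitAverage w =ᵐ[volume] w := by
  filter_upwards [K.ae_tendsto_average hw] with x hx
  exact hx.limUnder_eq

end MeanValueKernel

end MeanValue

section Regularity

namespace MeanValueKernel

variable {N : ℕ} (K : MeanValueKernel N) {Ω : Opens ℝ^N} {w h : ℝ^N → ℝ} {M : ℝ} {n : ℕ} {x : ℝ^N}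

lemma limitAverage_eventuallyEq (hw : IsWeakSolution Ω w h) (hw_int : LocallyIntegrable w)
    (hM : ∀ x, ‖h x‖ ≤ M) {r : ℝ} (hr : (1 / 2) ^ n < r) (hx : Metric.closedBall x r ⊆ Ω) :
    K.limitAverage w =ᶠ[𝓝 x] fun y ↦ K.average n w y + dyadicPotential K.κ n h y := by
  filter_upwards [Metric.ball_mem_nhds x (sub_pos.2 hr)] with y hy
  refine K.limitAverage_eq hw hw_int hM ((Metric.closedBall_subset_closedBall' ?_).trans hx)
  linarith [Metric.mem_ball.1 hy]

theorem contDiffOn_one_limitAverage (hw : IsWeakSolution Ω w h) (hw_int : LocallyIntegrable w)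
    (hh : LocallyIntegrable h) (hM : ∀ x, ‖h x‖ ≤ M) :
    ContDiffOn ℝ 1 (K.limitAverage w) Ω := by
  intro x hx
  obtain ⟨r, hr, hrΩ⟩ := Metric.nhds_basis_closedBall.mem_iff.1 (Ω.isOpen.mem_nhds hx)
  obtain ⟨n, hn⟩ := exists_pow_lt_of_lt_one hr one_half_lt_one
  refine (ContDiffAt.congr_of_eventuallyEq ?_
    (K.limitAverage_eventuallyEq hw hw_int hM hn hrΩ)).contDiffWithinAt
  exact (((K.contDiff_average n hw_int).of_le one_le_two).add (contDiff_one_dyadicPotential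
    (K.contDiff_κ.of_le one_le_two) K.κ_eq_zero hh hM n)).contDiffAt

theorem norm_fderiv_limitAverage_le (hw : IsWeakSolution Ω w h) (hw_int : LocallyIntegrable w)
    (hh : LocallyIntegrable h) (hM : ∀ x, ‖h x‖ ≤ M) {C : ℝ} (hC : ∀ x, ‖w x‖ ≤ C) {r : ℝ}
    (hr : (1 / 2) ^ n < r) (hx : Metric.closedBall x r ⊆ Ω) :
    ‖fderiv ℝ (K.limitAverage w) x‖ ≤
      2 ^ n * (∫ y, ‖fderiv ℝ K.η y‖) * C + 2 * ((∫ y, ‖fderiv ℝ K.κ y‖) * M) := by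
  have hη : ContDiff ℝ 1 K.η := K.contDiff_η.of_le one_le_two
  have hκ : ContDiff ℝ 1 K.κ := K.contDiff_κ.of_le one_le_two
  rw [(K.limitAverage_eventuallyEq hw hw_int hM hr hx).fderiv_eq, fderiv_fun_add
    ((K.contDiff_average n hw_int).differentiable two_ne_zero x)
    ((contDiff_one_dyadicPotential hκ K.κ_eq_zero hh hM n).differentiable one_ne_zero x)]
  exact (norm_add_le _ _).trans (add_le_add
    (norm_fderiv_dyadicDilate_convolution_le hη K.η_eq_zero hw_int hC n x)
    (norm_fderiv_dyadicPotential_le hκ K.κ_eq_zero hh hM n x))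

theorem contDiffOn_two_limitAverage (hw : IsWeakSolution Ω w h) (hw_int : LocallyIntegrable w)
    (hM : ∀ x, ‖h x‖ ≤ M) (hh : ContDiffOn ℝ 1 h Ω) :
    ContDiffOn ℝ 2 (K.limitAverage w) Ω := by
  intro x hx
  obtain ⟨r, hr, hrΩ⟩ := Metric.nhds_basis_closedBall.mem_iff.1 (Ω.isOpen.mem_nhds hx)
  obtain ⟨n, hn⟩ := exists_pow_lt_of_lt_one hr one_half_lt_one
  obtain ⟨g, hg, hg_supp, hg_eq⟩ := exists_contDiff_hasCompactSupport_eventuallyEq_nhdsSet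
    (n := 1) Ω.isOpen (isCompact_closedBall x r) hrΩ hh
  have hpotential : dyadicPotential K.κ n h =ᶠ[𝓝 x] dyadicPotential K.κ n g := by
    filter_upwards [Metric.ball_mem_nhds x (sub_pos.2 hn)] with y hy
    refine dyadicPotential_congr K.κ_eq_zero fun z hz ↦ (hg_eq.self_of_nhdsSet ?_).symm
    exact Metric.closedBall_subset_closedBall' (by linarith [Metric.mem_ball.1 hy]) hz
  refine (ContDiffAt.congr_of_eventuallyEq ?_
    ((K.limitAverage_eventuallyEq hw hw_int hM hn hrΩ).trans
      (hpotential.mono fun y hy ↦ congrArg (K.average n w y + ·) hy))).contDiffWithinAt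
  exact ((K.contDiff_average n hw_int).add (contDiff_two_dyadicPotential
    (K.contDiff_κ.of_le one_le_two) K.κ_eq_zero hg hg_supp n)).contDiffAt

lemma eqOn_limitAverage (hw : IsWeakSolution Ω w h) (hw_int : LocallyIntegrable w)
    (hh : LocallyIntegrable h) (hM : ∀ x, ‖h x‖ ≤ M) (hw_cont : ContinuousOn w Ω) :
    EqOn (K.limitAverage w) w Ω :=
  Measure.eqOn_open_of_ae_eq (ae_restrict_of_ae (K.limitAverage_ae_eq hw_int)) Ω.isOpen
    (K.contDiffOn_one_limitAverage hw hw_int hh hM).continuousOn hw_cont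

end MeanValueKernel

variable {N : ℕ} {Ω : Opens ℝ^N} {w h : ℝ^N → ℝ}

theorem IsWeakSolution.neg_lapl_eq (hw : IsWeakSolution Ω w h) (hw_diff : ContDiffOn ℝ 2 w Ω)
    (hh : ContinuousOn h Ω) : ∀ x ∈ Ω, -lapl w x = h x := by
  have hlapl : ContinuousOn (lapl w) Ω := continuousOn_lapl hw_diff
  have hae : ∀ᵐ x, x ∈ Ω → lapl w x + h x = 0 := by
    refine Ω.isOpen.ae_eq_zero_of_integral_contDiff_smul_eq_zero
      ((hlapl.add hh).locallyIntegrableOn Ω.isOpen.measurableSet) fun ψ hψ hψ_supp hψΩ ↦ ?_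
    let χ : 𝓓^{2}(Ω, ℝ) := ⟨ψ, contDiff_infty.1 hψ 2, hψ_supp, hψΩ⟩
    have hlaplχ : Integrable fun x ↦ lapl w x * ψ x :=
      integrable_mul_of_tsupport_subset Ω.isOpen hlapl hψ.continuous hψ_supp subset_rfl hψΩ
    have hhχ : Integrable fun x ↦ h x * ψ x :=
      integrable_mul_of_tsupport_subset Ω.isOpen hh hψ.continuous hψ_supp subset_rfl hψΩ
    calc ∫ x, ψ x • (lapl w x + h x)
        = (∫ x, ψ x * lapl w x) + ∫ x, h x * ψ x := by
          simp_rw [mul_comm (ψ _)]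
          rw [← integral_add hlaplχ hhχ]
          congr with x
          rw [smul_eq_mul]
          ring
      _ = 0 := by
          rw [add_eq_zero_iff_eq_neg]
          exact (integral_mul_lapl_testFunction hw_diff χ).symm.trans (hw χ)
  intro x hx
  have := Measure.eqOn_open_of_ae_eq (f := fun x ↦ lapl w x + h x)
    ((ae_restrict_iff' Ω.isOpen.measurableSet).2 hae) Ω.isOpen (hlapl.add hh)
    continuousOn_const hx
  simp only at this
  linarith

end Regularity

section StrongMinimum

lemma exists_two_pow_mul_mem_Ioo {t : ℝ} (ht : 0 < t) (ht' : 2 * t ≤ 1) :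
    ∃ k : ℕ, (1 / 2) ^ k < 4 * t ∧ 1 / 4 < 2 ^ k * t ∧ 2 ^ k * t < 1 := by
  obtain ⟨k, hk, hk'⟩ := exists_nat_pow_near_of_lt_one (mul_pos two_pos ht) ht'
    one_half_pos one_half_lt_one
  have hinv : (2 : ℝ) ^ k * (1 / 2) ^ k = 1 := by rw [← mul_pow]; norm_num
  have htwo : (0 : ℝ) < 2 ^ k := by positivity
  rw [pow_succ] at hk
  refine ⟨k, by linarith, ?_, ?_⟩
  · nlinarith [mul_lt_mul_of_pos_left hk htwo]
  · nlinarith [mul_le_mul_of_nonneg_left hk' htwo.le]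

variable {N : ℕ} {Ω : Opens ℝ^N} {w h : ℝ^N → ℝ} {M c : ℝ} {n : ℕ} {x z : ℝ^N}

namespace MeanValueKernel

variable (K : MeanValueKernel N)

lemma average_le (hw : IsWeakSolution Ω w h) (hw_int : LocallyIntegrable w)
    (hw_cont : ContinuousOn w Ω) (hh : LocallyIntegrable h) (hM : ∀ x, ‖h x‖ ≤ M)
    (hh_nonneg : ∀ x, 0 ≤ h x) (hx : Metric.closedBall x ((1 / 2) ^ n) ⊆ Ω) :
    K.average n w x ≤ w x := by
  have hxΩ : x ∈ (Ω : Set ℝ^N) := hx (Metric.mem_closedBall_self (by positivity))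
  have hpotential : 0 ≤ dyadicPotential K.κ n h x := by
    refine tsum_nonneg fun k ↦ ?_
    rw [dyadicTerm, convolution_lsmul_swap]
    exact smul_nonneg (by positivity) (integral_nonneg fun z ↦
      mul_nonneg (dyadicDilate_nonneg _ K.κ_nonneg _) (hh_nonneg z))
  rw [← K.eqOn_limitAverage hw hw_int hh hM hw_cont hxΩ, K.limitAverage_eq hw hw_int hM hx]
  exact le_add_of_nonneg_right hpotential

lemma lt_average (hw_int : LocallyIntegrable w)
    (hle : ∀ y ∈ Metric.closedBall x ((1 / 2) ^ n), c ≤ w y) (hw_cont : ContinuousAt w z)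
    (hlt : c < w z) (hz : 1 / 4 < 2 ^ n * ‖x - z‖) (hz' : 2 ^ n * ‖x - z‖ < 1) :
    c < K.average n w x := by
  let D (y : ℝ^N) : ℝ := dyadicDilate n K.η (x - y)
  have hη : Continuous K.η := K.contDiff_η.continuous
  have hD_cont : Continuous D :=
    (contDiff_dyadicDilate n K.contDiff_η).continuous.comp (continuous_const.sub continuous_id)
  have hD_int : Integrable D := (integrable_dyadicDilate hη K.η_eq_zero n).comp_sub_left x
  have hDw_int : Integrable fun y ↦ D y * w y :=
    integrable_dyadicDilate_sub_mul hη K.η_eq_zero hw_int n x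
  have hnonneg (y : ℝ^N) : 0 ≤ D y * (w y - c) := by
    rcases le_or_gt ‖x - y‖ ((1 / 2) ^ n) with hy | hy
    · refine mul_nonneg (dyadicDilate_nonneg n K.η_nonneg _) (sub_nonneg.2 (hle y ?_))
      rwa [Metric.mem_closedBall, dist_comm, dist_eq_norm]
    · rw [show D y = 0 from dyadicDilate_eq_zero K.η_eq_zero hy.le, zero_mul]
  have hpos : 0 < D z * (w z - c) := by
    refine mul_pos (mul_pos (by positivity) (K.η_pos _ ?_ ?_)) (sub_pos.2 hlt) <;>
    rwa [norm_smul, Real.norm_of_nonneg (by positivity)]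
  have hsub : (fun y ↦ D y * (w y - c)) = fun y ↦ D y * w y - D y * c := by
    simp only [mul_sub]
  have hint_pos : 0 < ∫ y, D y * (w y - c) := by
    rw [integral_pos_iff_support_of_nonneg hnonneg (hsub ▸ hDw_int.sub (hD_int.mul_const c))]
    refine Measure.measure_pos_of_mem_nhds volume (x := z) ?_
    filter_upwards [(hD_cont.continuousAt.mul (hw_cont.sub continuousAt_const)).eventually
      (lt_mem_nhds hpos)] with y hy
    exact hy.ne'
  rw [hsub, integral_sub hDw_int (hD_int.mul_const c), integral_mul_const,
    K.integral_dyadicDilate_η_sub, one_mul, ← K.average_eq_integral] at hint_pos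
  exact sub_pos.1 hint_pos

end MeanValueKernel

lemma IsWeakSolution.eventually_eq_of_isMinOn (hN : 1 ≤ N) (hw : IsWeakSolution Ω w h)
    (hw_int : LocallyIntegrable w) (hw_cont : ContinuousOn w Ω) (hh : LocallyIntegrable h)
    (hM : ∀ x, ‖h x‖ ≤ M) (hh_nonneg : ∀ x, 0 ≤ h x) (hx : x ∈ Ω) (hmin : IsMinOn w Ω x) :
    ∀ᶠ z in 𝓝 x, z ∈ Ω ∧ w z = w x := by
  obtain ⟨K⟩ := nonempty_meanValueKernel hN
  obtain ⟨r, hr, hrΩ⟩ := Metric.nhds_basis_closedBall.mem_iff.1 (Ω.isOpen.mem_nhds hx)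
  have hr' : 0 < min (r / 4) (1 / 2) := lt_min (by positivity) one_half_pos
  filter_upwards [Ω.isOpen.mem_nhds hx, Metric.ball_mem_nhds x hr'] with z hzΩ hz
  refine ⟨hzΩ, by_contra fun hne ↦ ?_⟩
  have hlt : w x < w z := lt_of_le_of_ne (hmin hzΩ) (Ne.symm hne)
  have hxz : 0 < ‖x - z‖ := norm_pos_iff.2 (sub_ne_zero.2 (by rintro rfl; exact hne rfl))
  rw [Metric.mem_ball, dist_comm, dist_eq_norm, lt_min_iff] at hz
  obtain ⟨k, hkr, hk, hk'⟩ := exists_two_pow_mul_mem_Ioo hxz (by linarith)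
  have hball : Metric.closedBall x ((1 / 2) ^ k) ⊆ Ω :=
    (Metric.closedBall_subset_closedBall (by linarith)).trans hrΩ
  exact (K.average_le hw hw_int hw_cont hh hM hh_nonneg hball).not_gt
    (K.lt_average hw_int (fun y hy ↦ hmin (hball hy))
      (hw_cont.continuousAt (Ω.isOpen.mem_nhds hzΩ)) hlt hk hk')

theorem IsWeakSolution.eq_of_isMinOn (hN : 1 ≤ N) (hΩ : IsPreconnected (Ω : Set ℝ^N))
    (hw : IsWeakSolution Ω w h) (hw_int : LocallyIntegrable w) (hw_cont : ContinuousOn w Ω)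
    (hh : LocallyIntegrable h) (hM : ∀ x, ‖h x‖ ≤ M) (hh_nonneg : ∀ x, 0 ≤ h x) (hx : x ∈ Ω)
    (hmin : IsMinOn w Ω x) : ∀ z ∈ Ω, w z = w x := by
  have hopen : IsOpen {z | z ∈ Ω ∧ w z = w x} := isOpen_iff_mem_nhds.2 fun z ⟨hz, hzx⟩ ↦ by
    rw [← hzx]
    exact hw.eventually_eq_of_isMinOn hN hw_int hw_cont hh hM hh_nonneg hz
      fun y hy ↦ hzx.trans_le (hmin hy)
  refine fun z hz ↦ (hΩ.subset_of_closure_inter_subset hopen ⟨x, hx, hx, rfl⟩ ?_ hz).2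
  rintro y ⟨hy, hyΩ⟩
  have hfreq : ∃ᶠ z in 𝓝 y, w z = w x := (mem_closure_iff_frequently.1 hy).mono fun z hz ↦ hz.2
  exact ⟨hyΩ, isClosed_singleton.mem_of_frequently_of_tendsto hfreq
    (hw_cont.continuousAt (Ω.isOpen.mem_nhds hyΩ))⟩

end StrongMinimum

section DirichletProblem

variable {N : ℕ} {Ω : Opens ℝ^N} {v v' w w' h h' ξ : ℝ^N → ℝ} {M : ℝ}

lemma locallyIntegrable_of_norm_le (hh : AEStronglyMeasurable h) (hM : ∀ x, ‖h x‖ ≤ M) :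
    LocallyIntegrable h :=
  (memLp_top_of_bound hh M (.of_forall hM)).locallyIntegrable le_top

lemma forall_mem_le_of_ae_restrict_le (hv : ContinuousOn v Ω) (hw : ContinuousOn w Ω)
    (hvw : ∀ᵐ x ∂volume.restrict (Ω : Set ℝ^N), v x ≤ w x) : ∀ x ∈ Ω, v x ≤ w x := fun x hx ↦ by
  have hmin : (fun x ↦ min (v x) (w x)) =ᵐ[volume.restrict (Ω : Set ℝ^N)] v :=
    hvw.mono fun x ↦ min_eq_left
  exact min_eq_left_iff.1 (Measure.eqOn_open_of_ae_eq hmin Ω.isOpen (hv.inf hw) hv hx)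

lemma IsWeakSolution.congr_ae (hw : IsWeakSolution Ω w h) (hww' : w =ᵐ[volume] w') :
    IsWeakSolution Ω w' h := fun ψ ↦ by
  rw [← hw ψ]
  exact integral_congr_ae (hww'.mono fun x hx ↦ by simp only [hx])

lemma IsWeakSolution.const_smul (hw : IsWeakSolution Ω w h) (c : ℝ) :
    IsWeakSolution Ω (c • w) (c • h) := fun ψ ↦ by
  simp only [Pi.smul_apply, smul_eq_mul, mul_assoc]
  rw [integral_const_mul, integral_const_mul, hw, mul_neg]

lemma integrable_mul_of_hasCompactSupport {g : ℝ^N → ℝ} (hw : LocallyIntegrable w)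
    (hg : Continuous g) (hg_supp : HasCompactSupport g) : Integrable fun x ↦ w x * g x := by
  simp_rw [mul_comm (w _)]
  exact hw.integrable_smul_left_of_hasCompactSupport hg hg_supp

lemma IsWeakSolution.add (hw : IsWeakSolution Ω w h) (hw' : IsWeakSolution Ω w' h')
    (hw_int : LocallyIntegrable w) (hw'_int : LocallyIntegrable w') (hh : LocallyIntegrable h)
    (hh' : LocallyIntegrable h') : IsWeakSolution Ω (w + w') (h + h') := fun ψ ↦ by
  have hψ : Continuous (lapl ψ) := continuous_lapl ψ.contDiff
  have hψ_supp : HasCompactSupport (lapl ψ) := hasCompactSupport_lapl ψ.hasCompactSupport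
  simp only [Pi.add_apply, add_mul]
  rw [integral_add (integrable_mul_of_hasCompactSupport hw_int hψ hψ_supp)
      (integrable_mul_of_hasCompactSupport hw'_int hψ hψ_supp),
    integral_add (integrable_mul_of_hasCompactSupport hh ψ.continuous ψ.hasCompactSupport)
      (integrable_mul_of_hasCompactSupport hh' ψ.continuous ψ.hasCompactSupport),
    hw, hw', neg_add]

lemma IsWeakSolution.contDiffOn_one (hN : 1 ≤ N) (hw : IsWeakSolution Ω w h)
    (hw_int : LocallyIntegrable w) (hw_cont : ContinuousOn w Ω) (hh : LocallyIntegrable h)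
    (hM : ∀ x, ‖h x‖ ≤ M) : ContDiffOn ℝ 1 w Ω := by
  obtain ⟨K⟩ := nonempty_meanValueKernel hN
  exact (K.contDiffOn_one_limitAverage hw hw_int hh hM).congr
    (K.eqOn_limitAverage hw hw_int hh hM hw_cont).symm

lemma IsWeakSolution.contDiffOn_two (hN : 1 ≤ N) (hw : IsWeakSolution Ω w h)
    (hw_int : LocallyIntegrable w) (hw_cont : ContinuousOn w Ω) (hh : LocallyIntegrable h)
    (hM : ∀ x, ‖h x‖ ≤ M) (hh_diff : ContDiffOn ℝ 1 h Ω) : ContDiffOn ℝ 2 w Ω := by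
  obtain ⟨K⟩ := nonempty_meanValueKernel hN
  exact (K.contDiffOn_two_limitAverage hw hw_int hM hh_diff).congr
    (K.eqOn_limitAverage hw hw_int hh hM hw_cont).symm

/-- The continuous weak solution `v` of the Dirichlet problem `-Δv = h` in `Ω`, `v = 0` on `∂Ω`,
extended by zero to the whole space. -/
structure IsDirichletSol (Ω : Opens ℝ^N) (v h : ℝ^N → ℝ) : Prop where
  continuous : Continuous v
  eq_zero : ∀ x ∉ Ω, v x = 0
  isWeakSolution : IsWeakSolution Ω v h

namespace IsDirichletSol

lemma locallyIntegrable (hv : IsDirichletSol Ω v h) : LocallyIntegrable v :=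
  hv.continuous.locallyIntegrable

lemma const_smul (hv : IsDirichletSol Ω v h) (c : ℝ) : IsDirichletSol Ω (c • v) (c • h) where
  continuous := hv.continuous.const_smul c
  eq_zero x hx := by rw [Pi.smul_apply, hv.eq_zero x hx, smul_zero]
  isWeakSolution := hv.isWeakSolution.const_smul c

lemma add (hv : IsDirichletSol Ω v h) (hv' : IsDirichletSol Ω v' h') (hh : LocallyIntegrable h)
    (hh' : LocallyIntegrable h') : IsDirichletSol Ω (v + v') (h + h') where
  continuous := hv.continuous.add hv'.continuous
  eq_zero x hx := by rw [Pi.add_apply, hv.eq_zero x hx, hv'.eq_zero x hx, add_zero]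
  isWeakSolution :=
    hv.isWeakSolution.add hv'.isWeakSolution hv.locallyIntegrable hv'.locallyIntegrable hh hh'

lemma hasCompactSupport (hv : IsDirichletSol Ω v h) (hΩ : Bornology.IsBounded (Ω : Set ℝ^N)) :
    HasCompactSupport v :=
  .of_support_subset_isCompact hΩ.isCompact_closure fun x hx ↦
    subset_closure (by_contra fun hxΩ ↦ hx (hv.eq_zero x hxΩ))

theorem nonneg (hN : 1 ≤ N) (hΩ : IsPreconnected (Ω : Set ℝ^N))
    (hΩ_bdd : Bornology.IsBounded (Ω : Set ℝ^N)) (hv : IsDirichletSol Ω v h)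
    (hh : LocallyIntegrable h) (hM : ∀ x, ‖h x‖ ≤ M) (hh_nonneg : ∀ x, 0 ≤ h x) (x : ℝ^N) :
    0 ≤ v x := by
  have : Nonempty (Fin N) := ⟨⟨0, hN⟩⟩
  obtain ⟨y, hy⟩ :=
    hv.continuous.exists_forall_le_of_hasCompactSupport (hv.hasCompactSupport hΩ_bdd)
  refine le_trans (le_of_not_gt fun hy_neg ↦ ?_) (hy x)
  have hyΩ : y ∈ Ω := by_contra fun hyΩ ↦ hy_neg.ne (hv.eq_zero y hyΩ)
  have hconst : ∀ z ∈ Ω, v z = v y := hv.isWeakSolution.eq_of_isMinOn hN hΩ hv.locallyIntegrable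
    hv.continuous.continuousOn hh hM hh_nonneg hyΩ fun z _ ↦ hy z
  have hΩ_closed : (Ω : Set ℝ^N) = v ⁻¹' {v y} := by
    refine Subset.antisymm hconst fun z hz ↦ by_contra fun hzΩ ↦ ?_
    exact hy_neg.ne ((mem_singleton_iff.1 hz).symm.trans (hv.eq_zero z hzΩ))
  have hΩ_univ : (Ω : Set ℝ^N) = univ := IsClopen.eq_univ
    ⟨hΩ_closed ▸ isClosed_singleton.preimage hv.continuous, Ω.isOpen⟩ ⟨y, hyΩ⟩
  exact NormedSpace.unbounded_univ ℝ ℝ^N (hΩ_univ ▸ hΩ_bdd)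

theorem unique (hN : 1 ≤ N) (hΩ : IsPreconnected (Ω : Set ℝ^N))
    (hΩ_bdd : Bornology.IsBounded (Ω : Set ℝ^N)) (hv : IsDirichletSol Ω v h)
    (hv' : IsDirichletSol Ω v' h) (hh : LocallyIntegrable h) : v = v' := by
  have hle {v v' : ℝ^N → ℝ} (hv : IsDirichletSol Ω v h) (hv' : IsDirichletSol Ω v' h) (x : ℝ^N) :
      v x ≤ v' x := by
    have hsub : IsDirichletSol Ω (v' + (-1 : ℝ) • v) 0 := by
      simpa using hv'.add (hv.const_smul (-1)) hh (hh.smul (-1))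
    have hnonneg := hsub.nonneg hN hΩ hΩ_bdd (M := 0) (locallyIntegrable_const 0)
      (fun x ↦ by simp) (fun _ ↦ le_rfl) x
    simpa using hnonneg
  exact funext fun x ↦ le_antisymm (hle hv hv' x) (hle hv' hv x)

end IsDirichletSol

lemma IsTorsionFn.continuous_indicator (hξ : IsTorsionFn (Ω : Set ℝ^N) ξ) :
    Continuous ((Ω : Set ℝ^N).indicator ξ) :=
  _root_.continuous_indicator hξ.2.2.2.2 hξ.1

lemma IsTorsionFn.indicator_nonneg (hξ : IsTorsionFn (Ω : Set ℝ^N) ξ) (x : ℝ^N) :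
    0 ≤ (Ω : Set ℝ^N).indicator ξ x :=
  Set.indicator_nonneg hξ.2.2.1 x

lemma continuous_of_abs_le_torsion (hξ : IsTorsionFn (Ω : Set ℝ^N) ξ) (hv : ContinuousOn v Ω)
    (hM : ∀ x, |v x| ≤ M * (Ω : Set ℝ^N).indicator ξ x) : Continuous v := by
  refine continuous_iff_continuousAt.2 fun x ↦ ?_
  by_cases hx : x ∈ Ω
  · exact hv.continuousAt (Ω.isOpen.mem_nhds hx)
  · have hbound : Tendsto (fun y ↦ M * (Ω : Set ℝ^N).indicator ξ y) (𝓝 x) (𝓝 0) := by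
      have hlim := (hξ.continuous_indicator.const_mul M).tendsto x
      rwa [indicator_of_notMem hx, mul_zero] at hlim
    have hvx : v x = 0 := by simpa [indicator_of_notMem (s := (Ω : Set ℝ^N)) hx] using hM x
    rw [ContinuousAt, hvx]
    exact squeeze_zero_norm hM hbound

lemma exists_locallyIntegrable_isWeakSolution_abs_le_torsion
    (hΩ : Bornology.IsBounded (Ω : Set ℝ^N)) (hξ : IsTorsionFn (Ω : Set ℝ^N) ξ)
    (hh : AEStronglyMeasurable h) (hM : ∀ x, ‖h x‖ ≤ M) :
    ∃ w, IsWeakSolution Ω w h ∧ LocallyIntegrable w ∧ (∀ x ∉ Ω, w x = 0) ∧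
      ∀ᵐ x ∂volume.restrict Ω, |w x| ≤ M * ξ x := by
  have hΩ_meas : MeasurableSet (Ω : Set ℝ^N) := Ω.isOpen.measurableSet
  obtain ⟨w, hw_int, hw_le, hw⟩ := exists_isWeakSolution_abs_le_torsion hΩ hξ hh.restrict
    ((norm_nonneg _).trans (hM 0)) fun x _ ↦ hM x
  have hw_eq : EqOn ((Ω : Set ℝ^N).indicator w) w Ω := fun x hx ↦ indicator_of_mem hx _
  refine ⟨(Ω : Set ℝ^N).indicator w, fun ψ ↦ ?_,
    (hw_int.integrable_indicator hΩ_meas).locallyIntegrable, fun x hx ↦ indicator_of_notMem hx w,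
    ?_⟩
  · rw [← hw ψ, ← setIntegral_mul_lapl_testFunction, ← setIntegral_mul_lapl_testFunction]
    exact setIntegral_congr_fun hΩ_meas fun x hx ↦ by simp only [hw_eq hx]
  · filter_upwards [hw_le, ae_restrict_mem hΩ_meas] with x hx hxΩ
    rwa [hw_eq hxΩ]

theorem exists_isDirichletSol_abs_le_torsion (hN : 1 ≤ N)
    (hΩ : Bornology.IsBounded (Ω : Set ℝ^N)) (hξ : IsTorsionFn (Ω : Set ℝ^N) ξ)
    (hh : AEStronglyMeasurable h) (hM : ∀ x, ‖h x‖ ≤ M) :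
    ∃ v, IsDirichletSol Ω v h ∧ ∀ x, |v x| ≤ M * (Ω : Set ℝ^N).indicator ξ x := by
  obtain ⟨K⟩ := nonempty_meanValueKernel hN
  obtain ⟨w, hw, hw_int, hw_zero, hw_le⟩ :=
    exists_locallyIntegrable_isWeakSolution_abs_le_torsion hΩ hξ hh hM
  have hcont : ContinuousOn (K.limitAverage w) Ω := (K.contDiffOn_one_limitAverage hw hw_int
    (locallyIntegrable_of_norm_le hh hM) hM).continuousOn
  have hle : ∀ x ∈ Ω, |K.limitAverage w x| ≤ M * ξ x := by
    refine forall_mem_le_of_ae_restrict_le hcont.abs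
      (continuousOn_const.mul (hξ.1.mono subset_closure)) ?_
    filter_upwards [hw_le, ae_restrict_of_ae (K.limitAverage_ae_eq hw_int)] with x hx hx_eq
    rwa [hx_eq]
  let v : ℝ^N → ℝ := (Ω : Set ℝ^N).indicator (K.limitAverage w)
  have hv_eq : EqOn v (K.limitAverage w) Ω := fun x hx ↦ indicator_of_mem hx _
  have hv_le (x : ℝ^N) : |v x| ≤ M * (Ω : Set ℝ^N).indicator ξ x := by
    by_cases hx : x ∈ (Ω : Set ℝ^N)
    · rw [hv_eq hx, indicator_of_mem hx]
      exact hle x hx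
    · rw [show v x = 0 from indicator_of_notMem hx _, abs_zero]
      exact mul_nonneg ((norm_nonneg _).trans (hM x)) (hξ.indicator_nonneg x)
  have hwv : w =ᵐ[volume] v := by
    filter_upwards [K.limitAverage_ae_eq hw_int] with x hx
    by_cases hxΩ : x ∈ (Ω : Set ℝ^N)
    · rw [hv_eq hxΩ, hx]
    · rw [hw_zero x hxΩ, show v x = 0 from indicator_of_notMem hxΩ _]
  exact ⟨v, ⟨continuous_of_abs_le_torsion hξ (hcont.congr hv_eq) hv_le,
    fun x hx ↦ indicator_of_notMem hx _, hw.congr_ae hwv⟩, hv_le⟩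

end DirichletProblem

section ZeroExtend

variable {α : Type*} {s : Set α}

/-- The extension by zero to the whole space of a function `u` defined on a subset. -/
def zeroExtend (u : s → ℝ) : α → ℝ := Function.extend Subtype.val u 0

@[simp]
lemma zeroExtend_coe (u : s → ℝ) (x : s) : zeroExtend u x = u x :=
  Subtype.val_injective.extend_apply u 0 x

lemma zeroExtend_of_notMem (u : s → ℝ) {x : α} (hx : x ∉ s) : zeroExtend u x = 0 :=
  Function.extend_apply' _ _ _ fun ⟨y, hy⟩ ↦ hx (hy ▸ y.2)

lemma zeroExtend_add (u v : s → ℝ) : zeroExtend (u + v) = zeroExtend u + zeroExtend v := by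
  simpa only [zeroExtend, add_zero] using Function.extend_add Subtype.val u v 0 0

lemma zeroExtend_smul (c : ℝ) (u : s → ℝ) : zeroExtend (c • u) = c • zeroExtend u := by
  simpa only [zeroExtend, smul_zero] using Function.extend_smul c Subtype.val u 0

lemma zeroExtend_nonneg {u : s → ℝ} (hu : 0 ≤ u) (x : α) : 0 ≤ zeroExtend u x := by
  by_cases hx : x ∈ s
  · lift x to s using hx
    rw [zeroExtend_coe]
    exact hu x
  · rw [zeroExtend_of_notMem u hx]

lemma measurable_zeroExtend [MeasurableSpace α] (hs : MeasurableSet s) {u : s → ℝ}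
    (hu : Measurable u) : Measurable (zeroExtend u) :=
  (MeasurableEmbedding.subtype_coe hs).measurable_extend hu measurable_const

variable [TopologicalSpace α]

lemma continuousOn_zeroExtend {u : s → ℝ} (hu : Continuous u) :
    ContinuousOn (zeroExtend u) s :=
  continuousOn_iff_continuous_domRestrict.2 (by simpa [Set.domRestrict_def] using hu)

lemma norm_zeroExtend_le [CompactSpace s] (u : C(s, ℝ)) (x : α) : ‖zeroExtend u x‖ ≤ ‖u‖ := by
  by_cases hx : x ∈ s
  · lift x to s using hx
    rw [zeroExtend_coe]
    exact u.norm_coe_le_norm x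
  · rw [zeroExtend_of_notMem u hx, norm_zero]
    exact norm_nonneg u

end ZeroExtend

section L2Seminorm

variable {X : Type*} [TopologicalSpace X] [CompactSpace X] [MeasurableSpace X] [BorelSpace X]
  (μ : Measure X) [IsFiniteMeasure μ] {u v : C(X, ℝ)}

/-- The `L²(μ)` norm on the space of continuous functions. -/
def l2Seminorm : Seminorm ℝ C(X, ℝ) :=
  (normSeminorm ℝ (Lp ℝ 2 μ)).comp (ContinuousMap.toLp 2 μ ℝ).toLinearMap

lemma l2Seminorm_eq_toReal_eLpNorm (u : C(X, ℝ)) : l2Seminorm μ u = (eLpNorm u 2 μ).toReal :=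
  (Lp.norm_def _).trans
    (congrArg ENNReal.toReal (eLpNorm_congr_ae (ContinuousMap.coeFn_toLp (𝕜 := ℝ) μ u)))

lemma continuous_l2Seminorm : Continuous (l2Seminorm μ) :=
  (ContinuousMap.toLp 2 μ ℝ).continuous.norm

lemma l2Seminorm_mono (hu : 0 ≤ u) (huv : u ≤ v) : l2Seminorm μ u ≤ l2Seminorm μ v := by
  refine Lp.norm_le_norm_of_ae_le ?_
  filter_upwards [ContinuousMap.coeFn_toLp (p := 2) (𝕜 := ℝ) μ u,
    ContinuousMap.coeFn_toLp (p := 2) (𝕜 := ℝ) μ v] with x hux hvx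
  have hux_nonneg : 0 ≤ u x := hu x
  have huvx : u x ≤ v x := huv x
  simp only [ContinuousLinearMap.coe_coe]
  rwa [hux, hvx, Real.norm_of_nonneg hux_nonneg, Real.norm_of_nonneg (hux_nonneg.trans huvx)]

lemma l2Seminorm_pos [μ.IsOpenPosMeasure] (hu : u ≠ 0) : 0 < l2Seminorm μ u :=
  (norm_pos_iff (a := ContinuousMap.toLp 2 μ ℝ u)).2
    ((map_ne_zero_iff _ (ContinuousMap.toLp_injective (𝕜 := ℝ) μ)).2 hu)

end L2Seminorm

section ClosureMeasure

variable {N : ℕ} (Ω : Opens ℝ^N)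

/-- The Lebesgue measure of `Ω`, seen as a measure on the compact space `closure Ω`. -/
def closureMeasure : Measure (closure (Ω : Set ℝ^N)) :=
  (volume.restrict (Ω : Set ℝ^N)).comap Subtype.val

lemma map_closureMeasure :
    (closureMeasure Ω).map Subtype.val = volume.restrict (Ω : Set ℝ^N) := by
  rw [closureMeasure, (MeasurableEmbedding.subtype_coe isClosed_closure.measurableSet).map_comap,
    Subtype.range_coe, Measure.restrict_restrict isClosed_closure.measurableSet,
    inter_eq_right.2 subset_closure]

lemma LpNorm_two_zeroExtend [CompactSpace (closure (Ω : Set ℝ^N))]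
    [IsFiniteMeasure (closureMeasure Ω)] (u : C(closure (Ω : Set ℝ^N), ℝ)) :
    LpNorm Ω 2 (zeroExtend u) = l2Seminorm (closureMeasure Ω) u := by
  rw [l2Seminorm_eq_toReal_eLpNorm, LpNorm, ← map_closureMeasure,
    (MeasurableEmbedding.subtype_coe isClosed_closure.measurableSet).eLpNorm_map_measure]
  congr 2
  exact funext (zeroExtend_coe u)

instance [CompactSpace (closure (Ω : Set ℝ^N))] : IsFiniteMeasure (closureMeasure Ω) := by
  have : IsFiniteMeasure (volume.restrict (Ω : Set ℝ^N)) := isFiniteMeasure_restrict.2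
    ((measure_mono subset_closure).trans_lt
      (isCompact_iff_compactSpace.2 ‹_›).measure_lt_top).ne
  exact inferInstanceAs
    (IsFiniteMeasure ((volume.restrict (Ω : Set ℝ^N)).comap (Subtype.val : closure _ → ℝ^N)))

instance : (closureMeasure Ω).IsOpenPosMeasure where
  open_pos := by
    rintro _ ⟨V, hV, rfl⟩ ⟨⟨x, hx⟩, hxV⟩
    have hVΩ : (V ∩ Ω).Nonempty := mem_closure_iff.1 hx V hV hxV
    refine ((hV.inter Ω.isOpen).measure_pos volume hVΩ).ne' ∘ measure_mono_null subset_rfl ∘ ?_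
    intro h
    rw [← Measure.restrict_apply hV.measurableSet, ← map_closureMeasure,
      Measure.map_apply measurable_subtype_coe hV.measurableSet, h]

end ClosureMeasure

section Compactness

variable {X : Type*} [TopologicalSpace X] [CompactSpace X]

theorem isCompact_closure_of_equicontinuous {A : Set C(X, ℝ)} {R : ℝ}
    (hA : ∀ u ∈ A, ‖u‖ ≤ R) (hA_equi : Equicontinuous fun (u : A) x ↦ (u : C(X, ℝ)) x) :
    IsCompact (closure A) := by
  let e : C(X, ℝ) ≃ₜ BoundedContinuousFunction X ℝ :=
    (ContinuousMap.isometryEquivBoundedOfCompact X ℝ).toHomeomorph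
  rw [← e.isCompact_image, e.image_closure]
  refine BoundedContinuousFunction.arzela_ascoli _ (isCompact_closedBall (0 : ℝ) R) _ ?_
    fun x U hU ↦ (hA_equi x U hU).mono ?_
  · rintro _ x ⟨u, hu, rfl⟩
    exact mem_closedBall_zero_iff.2 ((u.norm_coe_le_norm x).trans (hA u hu))
  · rintro y hy ⟨_, u, hu, rfl⟩
    exact hy ⟨u, hu⟩

end Compactness

section SolutionOperator

variable {N : ℕ} {Ω : Opens ℝ^N} {ξ : ℝ^N → ℝ}

lemma IsDirichletSol.exists_norm_sub_le (hN : 1 ≤ N) {x : ℝ^N} (hx : x ∈ Ω) (C M : ℝ) :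
    ∃ L r, 0 < r ∧ ∀ v h, IsDirichletSol Ω v h → LocallyIntegrable h → (∀ y, ‖v y‖ ≤ C) →
      (∀ y, ‖h y‖ ≤ M) → ∀ y ∈ Metric.ball x r, ‖v y - v x‖ ≤ L * ‖y - x‖ := by
  obtain ⟨K⟩ := nonempty_meanValueKernel hN
  obtain ⟨ρ, hρ, hρΩ⟩ := Metric.nhds_basis_closedBall.mem_iff.1 (Ω.isOpen.mem_nhds hx)
  obtain ⟨n, hn⟩ := exists_pow_lt_of_lt_one (half_pos hρ) one_half_lt_one
  have hball : ∀ z ∈ Metric.ball x (ρ / 2), Metric.closedBall z (ρ / 2) ⊆ Ω := fun z hz ↦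
    (Metric.closedBall_subset_closedBall' (by linarith [Metric.mem_ball.1 hz])).trans hρΩ
  refine ⟨2 ^ n * (∫ y, ‖fderiv ℝ K.η y‖) * C + 2 * ((∫ y, ‖fderiv ℝ K.κ y‖) * M), ρ / 2,
    half_pos hρ, fun v h hv hh hC hM y hy ↦ ?_⟩
  have heq : EqOn (K.limitAverage v) v Ω := K.eqOn_limitAverage hv.isWeakSolution
    hv.locallyIntegrable hh hM hv.continuous.continuousOn
  have hx_mem : x ∈ Metric.ball x (ρ / 2) := Metric.mem_ball_self (half_pos hρ)
  have hball_mem : ∀ z ∈ Metric.ball x (ρ / 2), z ∈ Ω := fun z hz ↦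
    hball z hz (Metric.mem_closedBall_self (half_pos hρ).le)
  rw [← heq (hball_mem y hy), ← heq hx]
  refine Convex.norm_image_sub_le_of_norm_fderiv_le (𝕜 := ℝ) (fun z hz ↦ ?_) (fun z hz ↦ ?_)
    (convex_ball x (ρ / 2)) hx_mem hy
  · exact ((K.contDiffOn_one_limitAverage hv.isWeakSolution hv.locallyIntegrable hh
      hM).contDiffAt (Ω.isOpen.mem_nhds (hball_mem z hz))).differentiableAt one_ne_zero
  · exact K.norm_fderiv_limitAverage_le hv.isWeakSolution hv.locallyIntegrable hh hM hC hn
      (hball z hz)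

variable [CompactSpace (closure (Ω : Set ℝ^N))]

lemma isBounded_of_compactSpace_closure (Ω : Opens ℝ^N) [CompactSpace (closure (Ω : Set ℝ^N))] :
    Bornology.IsBounded (Ω : Set ℝ^N) :=
  (isCompact_iff_compactSpace.2 ‹_›).isBounded.subset subset_closure

lemma locallyIntegrable_zeroExtend (u : C(closure (Ω : Set ℝ^N), ℝ)) :
    LocallyIntegrable (zeroExtend u) :=
  locallyIntegrable_of_norm_le (measurable_zeroExtend isClosed_closure.measurableSet
    u.continuous.measurable).aestronglyMeasurable (norm_zeroExtend_le u)

/-- `G` solves the Dirichlet problem on `Ω`: for `u ∈ C(Ω̄)`, `G u` is the weak solution of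
`-Δ(G u) = u` in `Ω`, `G u = 0` on `∂Ω`. -/
def IsSolutionOperator (Ω : Opens ℝ^N)
    (G : C(closure (Ω : Set ℝ^N), ℝ) →L[ℝ] C(closure (Ω : Set ℝ^N), ℝ)) : Prop :=
  ∀ u, IsDirichletSol Ω (zeroExtend (G u)) (zeroExtend u)

theorem exists_isSolutionOperator (hN : 1 ≤ N) (hΩ : IsPreconnected (Ω : Set ℝ^N))
    (hξ : IsTorsionFn (Ω : Set ℝ^N) ξ) :
    ∃ G : C(closure (Ω : Set ℝ^N), ℝ) →L[ℝ] C(closure (Ω : Set ℝ^N), ℝ),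
      IsSolutionOperator Ω G ∧
      ∀ u x, |zeroExtend (G u) x| ≤ ‖u‖ * (Ω : Set ℝ^N).indicator ξ x := by
  have hΩ_bdd := isBounded_of_compactSpace_closure Ω
  choose V hV hV_le using fun u : C(closure (Ω : Set ℝ^N), ℝ) ↦
    exists_isDirichletSol_abs_le_torsion hN hΩ_bdd hξ
      (measurable_zeroExtend isClosed_closure.measurableSet
        u.continuous.measurable).aestronglyMeasurable (norm_zeroExtend_le u)
  have hV_add (u v) : V (u + v) = V u + V v := (hV _).unique hN hΩ hΩ_bdd
    (zeroExtend_add u v ▸ (hV u).add (hV v) (locallyIntegrable_zeroExtend u)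
      (locallyIntegrable_zeroExtend v)) (locallyIntegrable_zeroExtend _)
  have hV_smul (c : ℝ) (u) : V (c • u) = c • V u := (hV _).unique hN hΩ hΩ_bdd
    (zeroExtend_smul c u ▸ (hV u).const_smul c) (locallyIntegrable_zeroExtend _)
  let G₀ : C(closure (Ω : Set ℝ^N), ℝ) →ₗ[ℝ] C(closure (Ω : Set ℝ^N), ℝ) :=
    { toFun u := ⟨fun x ↦ V u x, (hV u).continuous.comp continuous_subtype_val⟩
      map_add' u v := by ext x; exact congrFun (hV_add u v) x
      map_smul' c u := by ext x; exact congrFun (hV_smul c u) x }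
  have hG₀ (u) : zeroExtend (G₀ u) = V u := funext fun x ↦ by
    by_cases hx : x ∈ closure (Ω : Set ℝ^N)
    · exact zeroExtend_coe (G₀ u) ⟨x, hx⟩
    · rw [zeroExtend_of_notMem _ hx, (hV u).eq_zero x fun h ↦ hx (subset_closure h)]
  obtain ⟨B, hB⟩ := (isCompact_iff_compactSpace.2 ‹_›).exists_bound_of_continuousOn
    (hξ.continuous_indicator.continuousOn (s := closure (Ω : Set ℝ^N)))
  have hG₀_le (u) : ‖G₀ u‖ ≤ max B 0 * ‖u‖ := by
    refine (ContinuousMap.norm_le _ (by positivity)).2 fun x ↦ (hV_le u x).trans ?_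
    rw [mul_comm]
    gcongr
    exact (le_abs_self _).trans ((hB x x.2).trans (le_max_left B 0))
  exact ⟨G₀.mkContinuous _ hG₀_le, fun u ↦ (hG₀ u).symm ▸ hV u, fun u ↦ (hG₀ u).symm ▸ hV_le u⟩

variable {G : C(closure (Ω : Set ℝ^N), ℝ) →L[ℝ] C(closure (Ω : Set ℝ^N), ℝ)}

theorem IsSolutionOperator.monotone (hG : IsSolutionOperator Ω G) (hN : 1 ≤ N)
    (hΩ : IsPreconnected (Ω : Set ℝ^N)) : Monotone G := by
  refine (monotone_iff_map_nonneg G).2 fun u hu ↦ ContinuousMap.le_def.2 fun x ↦ ?_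
  rw [ContinuousMap.zero_apply, ← zeroExtend_coe (G u) x]
  exact (hG u).nonneg hN hΩ (isBounded_of_compactSpace_closure Ω) (locallyIntegrable_zeroExtend u)
    (norm_zeroExtend_le u) (zeroExtend_nonneg hu) x

/- Equicontinuity of the image of a ball: inside `Ω` by the interior gradient estimate, at the
boundary by comparison with the torsion function. -/
theorem IsSolutionOperator.isCompactOperator (hG : IsSolutionOperator Ω G) (hN : 1 ≤ N)
    (hξ : IsTorsionFn (Ω : Set ℝ^N) ξ)
    (hG_le : ∀ u x, |zeroExtend (G u) x| ≤ ‖u‖ * (Ω : Set ℝ^N).indicator ξ x) :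
    IsCompactOperator G := by
  refine (isCompactOperator_iff_isCompact_closure_image_closedBall
    (G : C(closure (Ω : Set ℝ^N), ℝ) →ₗ[ℝ] C(closure (Ω : Set ℝ^N), ℝ)) one_pos).2 ?_
  have hG_norm {u} (hu : u ∈ Metric.closedBall 0 1) : ‖G u‖ ≤ ‖G‖ :=
    G.unit_le_opNorm u (mem_closedBall_zero_iff.1 hu)
  refine isCompact_closure_of_equicontinuous (R := ‖G‖)
    (forall_mem_image.2 fun u hu ↦ hG_norm hu) fun x ↦ ?_
  by_cases hx : (x : ℝ^N) ∈ Ω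
  · obtain ⟨L, r, hr, hL⟩ := IsDirichletSol.exists_norm_sub_le hN hx ‖G‖ 1
    refine Metric.equicontinuousAt_of_continuity_modulus
      (fun y : closure (Ω : Set ℝ^N) ↦ L * ‖(y : ℝ^N) - x‖) ?_ _ ?_
    · exact Continuous.tendsto' (by fun_prop) _ _ (by simp)
    · filter_upwards [continuous_subtype_val.continuousAt.preimage_mem_nhds
        (Metric.ball_mem_nhds (x : ℝ^N) hr)] with y hy
      rintro ⟨_, u, hu, rfl⟩
      have hLy := hL _ _ (hG u) (locallyIntegrable_zeroExtend u)
        (fun z ↦ (norm_zeroExtend_le (G u) z).trans (hG_norm hu))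
        (fun z ↦ (norm_zeroExtend_le u z).trans (mem_closedBall_zero_iff.1 hu)) y hy
      rwa [zeroExtend_coe, zeroExtend_coe, ← dist_eq_norm, dist_comm] at hLy
  · refine Metric.equicontinuousAt_of_continuity_modulus
      (fun y : closure (Ω : Set ℝ^N) ↦ (Ω : Set ℝ^N).indicator ξ y) ?_ _
      (.of_forall fun y ↦ ?_)
    · exact (hξ.continuous_indicator.comp continuous_subtype_val).tendsto' _ _
        (indicator_of_notMem hx ξ)
    · rintro ⟨_, u, hu, rfl⟩
      have hGx : G u x = 0 := (zeroExtend_coe (G u) x).symm.trans ((hG u).eq_zero x hx)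
      have hGy := hG_le u y
      rw [zeroExtend_coe] at hGy
      simp only [ContinuousLinearMap.coe_coe, hGx, dist_zero_left, Real.norm_eq_abs]
      exact hGy.trans (mul_le_of_le_one_left (hξ.indicator_nonneg y) (mem_closedBall_zero_iff.1 hu))

end SolutionOperator

section OrderFixedPoint

variable {E : Type*} [TopologicalSpace E] [PartialOrder E] [OrderClosedTopology E] {K : Set E}

theorem exists_tendsto_of_monotone_of_isCompact {s : ℕ → E} (hs : Monotone s) (hK : IsCompact K)
    (hsK : ∀ n, s n ∈ K) : ∃ u, Tendsto s atTop (𝓝 u) := by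
  have le_of_mapClusterPt {v w} (hv : MapClusterPt v atTop s) (hw : MapClusterPt w atTop s) :
      v ≤ w := by
    obtain ⟨U, -, hUv⟩ := mapClusterPt_iff_ultrafilter.1 hv
    obtain ⟨V, hV, hVw⟩ := mapClusterPt_iff_ultrafilter.1 hw
    exact le_of_tendsto hUv (.of_forall fun m ↦ ge_of_tendsto hVw
      (hV ((eventually_ge_atTop m).mono fun n hn ↦ hs hn)))
  obtain ⟨u, -, hu⟩ := hK.exists_mapClusterPt (f := atTop) (u := s)
    (tendsto_principal.2 (.of_forall hsK))
  exact ⟨u, hK.tendsto_nhds_of_unique_mapClusterPt (.of_forall hsK) fun v _ hv ↦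
    (le_of_mapClusterPt hv hu).antisymm (le_of_mapClusterPt hu hv)⟩

theorem exists_isFixedPt_le_of_isCompact {T : E → E} (hT : Continuous T) (hT_mono : Monotone T)
    {a b : E} (ha : a ≤ T a) (hab : a ≤ b) (hb : T b ≤ b) (hK : IsCompact K)
    (hTK : ∀ u ∈ Icc a b, T u ∈ K) :
    ∃ u, Function.IsFixedPt T u ∧ a ≤ u ∧ ∀ v, a ≤ v → T v ≤ v → u ≤ v := by
  have hs : Monotone fun n ↦ T^[n] a := hT_mono.monotone_iterate_of_le_map ha
  have ha_le (n) : a ≤ T^[n] a := hs n.zero_le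
  have hle {v} (hav : a ≤ v) (hv : T v ≤ v) (n) : T^[n] a ≤ v := by
    induction n with
    | zero => exact hav
    | succ n ih => exact T.iterate_succ_apply' n a ▸ (hT_mono ih).trans hv
  obtain ⟨u, hu⟩ := exists_tendsto_of_monotone_of_isCompact (hs.comp Order.succ_mono) hK
    fun n ↦ by simpa [T.iterate_succ_apply'] using hTK _ ⟨ha_le n, hle hab hb n⟩
  replace hu := (tendsto_add_atTop_iff_nat (f := fun n ↦ T^[n] a) 1).1 hu
  exact ⟨u, isFixedPt_of_tendsto_iterate hu hT.continuousAt, ge_of_tendsto' hu ha_le,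
    fun v hav hv ↦ le_of_tendsto' hu (hle hav hv)⟩

end OrderFixedPoint

section RealFunctions

lemma continuousOn_of_antitoneOn_of_monotoneOn_mul {F g : ℝ → ℝ} {s : Set ℝ}
    (hF : AntitoneOn F s) (hgF : MonotoneOn (fun t ↦ g t * F t) s) (hg : ContinuousOn g s)
    (hg_pos : ∀ t ∈ s, 0 < g t) : ContinuousOn F s := by
  intro b hb
  have hlim : Tendsto (fun a ↦ g b / g a * F b) (𝓝[s] b) (𝓝 (F b)) := by
    have := ((tendsto_const_nhds (x := g b)).div (hg b hb) (hg_pos b hb).ne').mul_const (F b)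
    rwa [div_self (hg_pos b hb).ne', one_mul] at this
  have hlim_min := hlim.min (tendsto_const_nhds (x := F b))
  have hlim_max := hlim.max (tendsto_const_nhds (x := F b))
  rw [min_self] at hlim_min
  rw [max_self] at hlim_max
  refine tendsto_of_tendsto_of_tendsto_of_le_of_le' hlim_min hlim_max ?_ ?_ <;>
    filter_upwards [self_mem_nhdsWithin] with a ha <;>
    rw [div_mul_eq_mul_div]
  · rcases le_total a b with hab | hba
    · exact (min_le_right _ _).trans (hF ha hb hab)
    · exact (min_le_left _ _).trans
        ((div_le_iff₀' (hg_pos a ha)).2 (hgF hb ha hba))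
  · rcases le_total a b with hab | hba
    · exact ((le_div_iff₀' (hg_pos a ha)).2 (hgF ha hb hab)).trans (le_max_left _ _)
    · exact (hF hb ha hba).trans (le_max_right _ _)

lemma abs_rpow_sub_rpow_le {p m s t : ℝ} (hp : 1 ≤ p) (hs : s ∈ Icc 0 m) (ht : t ∈ Icc 0 m) :
    |s ^ p - t ^ p| ≤ p * m ^ (p - 1) * |s - t| := by
  refine (convex_Icc 0 m).norm_image_sub_le_of_norm_deriv_le (𝕜 := ℝ) (f := fun x ↦ x ^ p)
    (fun x _ ↦ (hasDerivAt_rpow_const (.inr hp)).differentiableAt) (fun x hx ↦ ?_) ht hs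
  rw [(hasDerivAt_rpow_const (.inr hp)).deriv, Real.norm_of_nonneg
    (mul_nonneg (by linarith) (rpow_nonneg hx.1 _))]
  gcongr
  · exact hx.1
  · exact hx.2

lemma hasStrictFDerivAt_zero_of_norm_sub_le {E F : Type*} [SeminormedAddCommGroup E]
    [NormedSpace ℝ E] [SeminormedAddCommGroup F] [NormedSpace ℝ F] {f : E → F} {c : ℝ → ℝ}
    (hc : Tendsto c (𝓝 0) (𝓝 0)) (hf : ∀ u v, ‖f u - f v‖ ≤ c (max ‖u‖ ‖v‖) * ‖u - v‖) :
    HasStrictFDerivAt f (0 : E →L[ℝ] F) 0 := by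
  have hmax : Tendsto (fun w : E × E ↦ max ‖w.1‖ ‖w.2‖) (𝓝 (0, 0)) (𝓝 0) :=
    Continuous.tendsto' (by fun_prop) _ _ (by simp)
  refine .of_isLittleO (Asymptotics.isLittleO_iff.2 fun ε hε ↦ ?_)
  filter_upwards [(hc.comp hmax).eventually (ge_mem_nhds hε)] with w hw
  rw [zero_apply, sub_zero]
  exact (hf w.1 w.2).trans (mul_le_mul_of_nonneg_right hw (norm_nonneg _))

end RealFunctions

section PosPow

variable {X : Type*} [TopologicalSpace X] {p : Ioi (0 : ℝ)}

instance : OrderClosedTopology C(X, ℝ) where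
  isClosed_le' := by
    simp only [ContinuousMap.le_def, ofPred_forall]
    exact isClosed_iInter fun x ↦ isClosed_le (by fun_prop) (by fun_prop)

/-- The operator `u ↦ (u⁺) ^ p` on continuous functions. The exponent is an element of `(0, ∞)`,
so that one can speak of continuity in the pair `(p, u)`. -/
def posPow (p : Ioi (0 : ℝ)) (u : C(X, ℝ)) : C(X, ℝ) :=
  (⟨fun t ↦ t⁺ ^ (p : ℝ), (continuous_rpow_const p.2.le).comp continuous_posPart⟩ : C(ℝ, ℝ)).comp u

lemma posPart_le_norm (t : ℝ) : t⁺ ≤ ‖t‖ := sup_le (le_abs_self t) (abs_nonneg t)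

lemma posPow_apply (u : C(X, ℝ)) (x : X) : posPow p u x = (u x)⁺ ^ (p : ℝ) := rfl

lemma posPow_nonneg (u : C(X, ℝ)) : 0 ≤ posPow p u :=
  ContinuousMap.le_def.2 fun x ↦ rpow_nonneg (posPart_nonneg (u x)) p

lemma monotone_posPow : Monotone (posPow p : C(X, ℝ) → C(X, ℝ)) := fun _ _ huv ↦
  ContinuousMap.le_def.2 fun x ↦
    rpow_le_rpow (posPart_nonneg _) (posPart_mono (ContinuousMap.le_def.1 huv x)) p.2.le

lemma posPow_smul {c : ℝ} (hc : 0 ≤ c) (u : C(X, ℝ)) :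
    posPow p (c • u) = c ^ (p : ℝ) • posPow p u := by
  ext x
  simp only [posPow_apply, ContinuousMap.smul_apply, smul_eq_mul]
  rw [← mul_rpow hc (posPart_nonneg _)]
  rw [posPart_def, posPart_def, mul_max_of_nonneg _ _ hc, mul_zero]

lemma continuous_posPow : Continuous fun w : Ioi (0 : ℝ) × C(X, ℝ) ↦ posPow w.1 w.2 := by
  refine Continuous.compCM (ContinuousMap.continuous_of_continuous_uncurry _ ?_) continuous_snd
  refine continuous_iff_continuousAt.2 fun w ↦ ?_
  exact (Real.continuousAt_rpow_of_pos (w.2⁺, w.1.1) w.1.1.2).comp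
    (f := fun w : (Ioi (0 : ℝ) × C(X, ℝ)) × ℝ ↦ (w.2⁺, (w.1.1 : ℝ))) (by fun_prop)

variable [CompactSpace X]

lemma norm_posPow_le (u : C(X, ℝ)) : ‖posPow p u‖ ≤ ‖u‖ ^ (p : ℝ) := by
  refine (ContinuousMap.norm_le _ (by positivity)).2 fun x ↦ ?_
  rw [posPow_apply, Real.norm_of_nonneg (rpow_nonneg (posPart_nonneg _) _)]
  exact rpow_le_rpow (posPart_nonneg _)
    ((posPart_le_norm (u x)).trans (u.norm_coe_le_norm x)) p.2.le

lemma norm_posPow_sub_posPow_le (hp : 1 ≤ (p : ℝ)) (u v : C(X, ℝ)) :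
    ‖posPow p u - posPow p v‖ ≤ p * max ‖u‖ ‖v‖ ^ (p - 1 : ℝ) * ‖u - v‖ := by
  have : 0 < (p : ℝ) := p.2
  refine (ContinuousMap.norm_le _ (by positivity)).2 fun x ↦ ?_
  have hmem {w : C(X, ℝ)} (hw : ‖w‖ ≤ max ‖u‖ ‖v‖) : (w x)⁺ ∈ Icc 0 (max ‖u‖ ‖v‖) :=
    ⟨posPart_nonneg _, (posPart_le_norm (w x)).trans ((w.norm_coe_le_norm x).trans hw)⟩
  refine (abs_rpow_sub_rpow_le hp (hmem (le_max_left _ _)) (hmem (le_max_right _ _))).trans ?_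
  gcongr
  exact (abs_max_sub_max_le_abs (u x) (v x) 0).trans ((u - v).norm_coe_le_norm x)

lemma hasStrictFDerivAt_posPow_zero (hp : 1 < (p : ℝ)) :
    HasStrictFDerivAt (posPow p) (0 : C(X, ℝ) →L[ℝ] C(X, ℝ)) 0 := by
  refine hasStrictFDerivAt_zero_of_norm_sub_le (c := fun m ↦ p * m ^ (p - 1 : ℝ)) ?_
    (norm_posPow_sub_posPow_le hp.le)
  refine Continuous.tendsto' ((continuous_rpow_const (by linarith)).const_mul _) _ _ ?_
  rw [zero_rpow (by linarith), mul_zero]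

end PosPow

section AbstractCarrierEquation

variable {X : Type*} [TopologicalSpace X] {G : C(X, ℝ) →L[ℝ] C(X, ℝ)}
  {ν : Seminorm ℝ C(X, ℝ)} {p : Ioi (0 : ℝ)} {d : ℝ} {ψ u : C(X, ℝ)}

/-- `u` solves `(1 + d ν(u)²) u = G((u⁺)ᵖ) + ψ`. This is the Carrier problem if `G = (-Δ)⁻¹`, `ν` is
the `L²` norm and `ψ = λ (-Δ)⁻¹ f`. -/
def IsCarrierSol (G : C(X, ℝ) →L[ℝ] C(X, ℝ)) (ν : Seminorm ℝ C(X, ℝ)) (d : ℝ) (p : Ioi (0 : ℝ))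
    (ψ u : C(X, ℝ)) : Prop :=
  (1 + d * ν u ^ 2) • u = G (posPow p u) + ψ

lemma IsCarrierSol.eq_inv_smul (hu : IsCarrierSol G ν d p ψ u) (hd : 0 ≤ d) :
    u = (1 + d * ν u ^ 2)⁻¹ • (G (posPow p u) + ψ) :=
  (eq_inv_smul_iff₀ (by positivity)).2 hu

lemma IsCarrierSol.nonneg (hu : IsCarrierSol G ν d p ψ u) (hG : Monotone G) (hd : 0 ≤ d)
    (hψ : 0 ≤ ψ) : 0 ≤ u := by
  rw [hu.eq_inv_smul hd]
  exact smul_nonneg (by positivity)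
    (add_nonneg ((monotone_iff_map_nonneg G).1 hG _ (posPow_nonneg u)) hψ)

section Superlinear

variable [CompactSpace X]

lemma hasStrictFDerivAt_seminorm_sq_smul_zero {E : Type*} [SeminormedAddCommGroup E]
    [NormedSpace ℝ E] {ν : Seminorm ℝ E} (hν : Continuous ν) :
    HasStrictFDerivAt (fun u ↦ ν u ^ 2 • u) (0 : E →L[ℝ] E) 0 := by
  obtain ⟨C, hC, hνC⟩ := ν.bound_of_continuous_normedSpace hν
  refine hasStrictFDerivAt_zero_of_norm_sub_le (c := fun m ↦ 3 * C ^ 2 * m ^ 2)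
    (Continuous.tendsto' (by fun_prop) _ _ (by simp)) fun u v ↦ ?_
  set m := max ‖u‖ ‖v‖
  have hνu : ν u ≤ C * m := (hνC u).trans (by gcongr; exact le_max_left _ _)
  have hνv : ν v ≤ C * m := (hνC v).trans (by gcongr; exact le_max_right _ _)
  have hν_sub : |ν u - ν v| ≤ C * ‖u - v‖ := (abs_sub_map_le_sub ν u v).trans (hνC _)
  calc ‖ν u ^ 2 • u - ν v ^ 2 • v‖
      = ‖ν u ^ 2 • (u - v) + ((ν u + ν v) * (ν u - ν v)) • v‖ := by congr 1; module
    _ ≤ ν u ^ 2 * ‖u - v‖ + (ν u + ν v) * |ν u - ν v| * ‖v‖ := by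
        refine (norm_add_le _ _).trans_eq ?_
        rw [norm_smul, norm_smul, norm_mul, Real.norm_of_nonneg (sq_nonneg _),
          Real.norm_of_nonneg (by positivity : 0 ≤ ν u + ν v), Real.norm_eq_abs]
    _ ≤ (C * m) ^ 2 * ‖u - v‖ + (C * m + C * m) * (C * ‖u - v‖) * m := by
        gcongr
        exact le_max_right _ _
    _ = 3 * C ^ 2 * m ^ 2 * ‖u - v‖ := by ring

/- Both nonlinear terms are negligible near `0`, so the inverse function theorem applies. -/
theorem eventually_exists_isCarrierSol_of_one_lt (hν : Continuous ν) (hp : 1 < (p : ℝ)) :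
    ∀ᶠ ψ in 𝓝 0, ∃ u, IsCarrierSol G ν d p ψ u := by
  have hF : HasStrictFDerivAt (fun u : C(X, ℝ) ↦ u + d • ν u ^ 2 • u - G (posPow p u))
      (ContinuousLinearEquiv.refl ℝ C(X, ℝ) : C(X, ℝ) →L[ℝ] C(X, ℝ)) 0 := by
    refine (((hasStrictFDerivAt_id _).add
      ((hasStrictFDerivAt_seminorm_sq_smul_zero hν).const_smul d)).sub
      (G.hasStrictFDerivAt.comp 0 (hasStrictFDerivAt_posPow_zero hp))).congr_fderiv ?_
    ext1 u
    simp
  have hF_zero : (0 : C(X, ℝ)) + d • ν 0 ^ 2 • 0 - G (posPow p 0) = 0 := by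
    have h := posPow_smul (p := p) le_rfl (0 : C(X, ℝ))
    rw [zero_smul, zero_rpow p.2.ne', zero_smul] at h
    simp [h]
  have hrange := hF.map_nhds_eq_of_equiv ▸ image_mem_map univ_mem
  rw [hF_zero] at hrange
  filter_upwards [hrange]
  rintro _ ⟨u, -, rfl⟩
  exact ⟨u, by rw [IsCarrierSol]; module⟩

end Superlinear

section Sublinear

variable {T : C(X, ℝ) → C(X, ℝ)} {q s t : ℝ} {u v : C(X, ℝ)}

/-- `u` is the least nonnegative solution of `T u = t u`. -/
structure IsLeastSol (T : C(X, ℝ) → C(X, ℝ)) (t : ℝ) (u : C(X, ℝ)) : Prop where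
  map_eq : T u = t • u
  nonneg : 0 ≤ u
  le_of_map_le : ∀ v, 0 ≤ v → T v ≤ t • v → u ≤ v

lemma IsLeastSol.le (hu : IsLeastSol T s u) (hv : IsLeastSol T t v) (hst : s ≤ t) : v ≤ u :=
  hv.le_of_map_le u hu.nonneg (hu.map_eq ▸ smul_le_smul_of_nonneg_right hst hu.nonneg)

variable [CompactSpace X]

/-- `T` is a monotone compact operator on `C(X)` which grows at most like `u ↦ uᵖ` along rays. -/
structure IsSubhomogeneous (T : C(X, ℝ) → C(X, ℝ)) (p : ℝ) : Prop where
  continuous : Continuous T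
  monotone : Monotone T
  map_zero_nonneg : 0 ≤ T 0
  exists_isCompact : ∀ R, ∃ K, IsCompact K ∧ ∀ u, ‖u‖ ≤ R → T u ∈ K
  map_smul_le : ∀ r ≥ (1 : ℝ), ∀ u ≥ 0, T (r • u) ≤ r ^ p • T u

lemma le_norm_smul_one (u : C(X, ℝ)) : u ≤ ‖u‖ • 1 :=
  ContinuousMap.le_def.2 fun x ↦ by
    simpa using (le_abs_self (u x)).trans (u.norm_coe_le_norm x)

lemma norm_le_norm_of_nonneg_of_le {u v : C(X, ℝ)} (hu : 0 ≤ u) (huv : u ≤ v) : ‖u‖ ≤ ‖v‖ := by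
  refine (ContinuousMap.norm_le _ (norm_nonneg v)).2 fun x ↦ ?_
  rw [Real.norm_of_nonneg (ContinuousMap.le_def.1 hu x)]
  exact (ContinuousMap.le_def.1 huv x).trans ((le_abs_self _).trans (v.norm_coe_le_norm x))

lemma IsSubhomogeneous.exists_map_le (hT : IsSubhomogeneous T q) (hq : q < 1) :
    ∃ b, 0 ≤ b ∧ T b ≤ b := by
  obtain ⟨R, hR, hTR⟩ : ∃ R : ℝ, 1 ≤ R ∧ ‖T 1‖ ≤ R ^ (1 - q) :=
    ((eventually_ge_atTop 1).and ((tendsto_rpow_atTop (sub_pos.2 hq)).eventually_ge_atTop _)).exists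
  refine ⟨R • 1, smul_nonneg (by positivity) zero_le_one, ?_⟩
  calc T (R • 1) ≤ R ^ q • T 1 := hT.map_smul_le R hR 1 zero_le_one
    _ ≤ R ^ q • ‖T 1‖ • 1 := smul_le_smul_of_nonneg_left (le_norm_smul_one _) (by positivity)
    _ ≤ R ^ q • R ^ (1 - q) • 1 := smul_le_smul_of_nonneg_left
        (smul_le_smul_of_nonneg_right hTR zero_le_one) (by positivity)
    _ = R • 1 := by rw [smul_smul, ← rpow_add (by positivity), add_sub_cancel, rpow_one]

lemma IsSubhomogeneous.exists_isLeastSol (hT : IsSubhomogeneous T q) (hq : q < 1)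
    (ht : 1 ≤ t) : ∃ u, IsLeastSol T t u := by
  have ht_pos : 0 < t := by positivity
  obtain ⟨b, hb, hTb⟩ := hT.exists_map_le hq
  obtain ⟨K, hK, hTK⟩ := hT.exists_isCompact ‖b‖
  have hTb_t : t⁻¹ • T b ≤ b :=
    (inv_smul_le_iff_of_pos ht_pos).2 (hTb.trans (le_smul_of_one_le_left hb ht))
  obtain ⟨u, hu, hu_nonneg, hu_le⟩ := exists_isFixedPt_le_of_isCompact (T := fun u ↦ t⁻¹ • T u)
    (by have := hT.continuous; fun_prop) (fun _ _ h ↦ smul_le_smul_of_nonneg_left (hT.monotone h)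
      (by positivity)) (smul_nonneg (by positivity) hT.map_zero_nonneg) hb hTb_t
    (hK.smul t⁻¹) fun u hu ↦ smul_mem_smul_set (hTK u (norm_le_norm_of_nonneg_of_le hu.1 hu.2))
  exact ⟨u, (inv_smul_eq_iff₀ ht_pos.ne').1 hu, hu_nonneg,
    fun v hv hTv ↦ hu_le v hv ((inv_smul_le_iff_of_pos ht_pos).2 hTv)⟩

lemma IsSubhomogeneous.le_rpow_smul (hT : IsSubhomogeneous T q) (hq : q < 1)
    (hu : IsLeastSol T s u) (hv : IsLeastSol T t v) (hs : 0 < s) (hst : s ≤ t) :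
    u ≤ (t / s) ^ (1 - q)⁻¹ • v := by
  have hts : 1 ≤ t / s := (one_le_div hs).2 hst
  set r := (t / s) ^ (1 - q)⁻¹
  have hr : 1 ≤ r := one_le_rpow hts (by simp [hq.le])
  have hr_rpow : r ^ (1 - q) = t / s := rpow_inv_rpow (by positivity) (sub_pos.2 hq).ne'
  refine hu.le_of_map_le _ (smul_nonneg (by positivity) hv.nonneg)
    ((hT.map_smul_le r hr v hv.nonneg).trans_eq ?_)
  rw [hv.map_eq, smul_smul, smul_smul]
  congr 1
  calc r ^ q * t = s * (r ^ q * r ^ (1 - q)) := by rw [hr_rpow]; field_simp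
    _ = s * r := by rw [← rpow_add (by positivity), add_sub_cancel, rpow_one]

lemma IsSubhomogeneous.continuousOn_isLeastSol (hT : IsSubhomogeneous T q) (hq : q < 1)
    (hν : MonotoneOn ν (Ici 0)) {u : ℝ → C(X, ℝ)} (hu : ∀ t ≥ 1, IsLeastSol T t (u t)) :
    ContinuousOn (fun t ↦ ν (u t)) (Ici 1) := by
  refine continuousOn_of_antitoneOn_of_monotoneOn_mul (g := fun t ↦ t ^ (1 - q)⁻¹)
    (fun s hs t ht hst ↦ hν (hu t ht).nonneg (hu s hs).nonneg ((hu s hs).le (hu t ht) hst))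
    (fun s hs t ht hst ↦ ?_)
    (continuousOn_id.rpow_const fun t ht ↦ .inl (zero_lt_one.trans_le ht).ne')
    fun t ht ↦ rpow_pos_of_pos (zero_lt_one.trans_le ht) _
  have hs_pos : 0 < s := zero_lt_one.trans_le hs
  have ht_pos : 0 < t := hs_pos.trans_le hst
  have h := hν (hu s hs).nonneg (smul_nonneg (by positivity) (hu t ht).nonneg)
    (hT.le_rpow_smul hq (hu s hs) (hu t ht) hs_pos hst)
  rw [map_smul_eq_mul, Real.norm_of_nonneg (by positivity), div_rpow ht_pos.le hs_pos.le,
    div_mul_eq_mul_div] at h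
  exact (le_div_iff₀' (by positivity)).1 h

/- The least solution `u t` of `T u = t u` decreases in `t`, but `t ^ (1 / (1 - q)) • u t`
increases. So `t ↦ 1 + d * ν (u t) ^ 2` is continuous and has a fixed point. -/
theorem IsSubhomogeneous.exists_map_eq_smul (hT : IsSubhomogeneous T q) (hq : q < 1)
    (hd : 0 ≤ d) (hν : MonotoneOn ν (Ici 0)) : ∃ u, T u = (1 + d * ν u ^ 2) • u := by
  choose! u hu using fun t (ht : 1 ≤ t) ↦ hT.exists_isLeastSol hq ht
  have h_le {t : ℝ} : 1 ≤ 1 + d * ν (u t) ^ 2 := le_add_of_nonneg_right (by positivity)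
  obtain ⟨t, ht, hfix⟩ := exists_mem_Icc_isFixedPt (f := fun t ↦ 1 + d * ν (u t) ^ 2)
    ((((hT.continuousOn_isLeastSol hq hν hu).mono Icc_subset_Ici_self).pow 2).const_mul d
      |>.const_add 1) h_le h_le (by
      gcongr
      exact hν (hu _ h_le).nonneg (hu _ le_rfl).nonneg ((hu _ le_rfl).le (hu _ h_le) h_le))
  exact ⟨u t, by rw [(hu t ht.1).map_eq, hfix.eq]⟩

lemma isSubhomogeneous_posPow (hG_mono : Monotone G) (hG : IsCompactOperator G) (hψ : 0 ≤ ψ) :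
    IsSubhomogeneous (fun u ↦ G (posPow p u) + ψ) p where
  continuous := by
    have : Continuous (posPow p : C(X, ℝ) → C(X, ℝ)) := continuous_posPow.comp (.prodMk_right p)
    fun_prop
  monotone _ _ h := add_le_add_left (hG_mono (monotone_posPow h)) ψ
  map_zero_nonneg := add_nonneg ((monotone_iff_map_nonneg G).1 hG_mono _ (posPow_nonneg 0)) hψ
  exists_isCompact R := by
    refine ⟨_, (hG.isCompact_closure_image_closedBall
      (f := (G : C(X, ℝ) →ₗ[ℝ] C(X, ℝ))) (R ^ (p : ℝ))).add isCompact_singleton, fun u hu ↦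
      add_mem_add (subset_closure ⟨posPow p u, ?_, rfl⟩) (mem_singleton ψ)⟩
    exact mem_closedBall_zero_iff.2
      ((norm_posPow_le u).trans (rpow_le_rpow (norm_nonneg u) hu p.2.le))
  map_smul_le r hr u _ := by
    simp only [posPow_smul (zero_le_one.trans hr), map_smul, smul_add]
    gcongr
    exact le_smul_of_one_le_left hψ (one_le_rpow hr p.2.le)

theorem exists_isCarrierSol_of_lt_one (hG_mono : Monotone G) (hG : IsCompactOperator G)
    (hν : MonotoneOn ν (Ici 0)) (hd : 0 ≤ d) (hψ : 0 ≤ ψ) (hp : (p : ℝ) < 1) :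
    ∃ u, IsCarrierSol G ν d p ψ u :=
  ((isSubhomogeneous_posPow hG_mono hG hψ).exists_map_eq_smul hp hd hν).imp
    fun _ ↦ Eq.symm

end Sublinear

end AbstractCarrierEquation

section AbstractCarrierExistence

variable {X : Type*} [TopologicalSpace X] [CompactSpace X] {G : C(X, ℝ) →L[ℝ] C(X, ℝ)}
  {ν : Seminorm ℝ C(X, ℝ)} {p : Ioi (0 : ℝ)} {d : ℝ} {ψ φ u : C(X, ℝ)}

lemma norm_posPow_le_max (hp : (p : ℝ) ≤ 1) (u : C(X, ℝ)) : ‖posPow p u‖ ≤ max 1 ‖u‖ :=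
  calc ‖posPow p u‖ ≤ ‖u‖ ^ (p : ℝ) := norm_posPow_le u
    _ ≤ max 1 ‖u‖ ^ (p : ℝ) := rpow_le_rpow (norm_nonneg u) (le_max_right 1 _) p.2.le
    _ ≤ max 1 ‖u‖ ^ (1 : ℝ) := rpow_le_rpow_of_exponent_le (le_max_left 1 _) hp
    _ = max 1 ‖u‖ := rpow_one _

lemma exists_isCompact_smul_mem_of_isCarrierSol (hG : IsCompactOperator G) (ν : Seminorm ℝ C(X, ℝ))
    (hd : 0 ≤ d) (ψ : C(X, ℝ)) (R : ℝ) :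
    ∃ K, IsCompact K ∧ ∀ (p : Ioi (0 : ℝ)) u, (p : ℝ) ≤ 1 → IsCarrierSol G ν d p ψ u →
      ∀ s ∈ Icc (0 : ℝ) 1, s * max 1 ‖u‖ ≤ R → s • u ∈ K := by
  refine ⟨_, (hG.isCompact_closure_image_closedBall (f := (G : C(X, ℝ) →ₗ[ℝ] C(X, ℝ))) R).add
    ((isCompact_Icc (a := 0) (b := 1)).image (by fun_prop : Continuous fun b : ℝ ↦ b • ψ)),
    fun p u hp hu s hs hsR ↦ ?_⟩
  set A := 1 + d * ν u ^ 2
  have hA : A⁻¹ ≤ 1 := inv_le_one_of_one_le₀ (le_add_of_nonneg_right (by positivity))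
  have hA_nonneg : 0 ≤ A⁻¹ := by positivity
  have hsu : s • u = G ((s * A⁻¹) • posPow p u) + (s * A⁻¹) • ψ := by
    rw [map_smul, ← smul_add, ← smul_smul, ← hu.eq_inv_smul hd]
  rw [hsu]
  refine add_mem_add (subset_closure ⟨_, mem_closedBall_zero_iff.2 ?_, rfl⟩)
    ⟨_, ⟨mul_nonneg hs.1 hA_nonneg, mul_le_one₀ hs.2 hA_nonneg hA⟩, rfl⟩
  rw [norm_smul, Real.norm_of_nonneg (mul_nonneg hs.1 hA_nonneg)]
  calc s * A⁻¹ * ‖posPow p u‖ ≤ s * 1 * max 1 ‖u‖ := by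
        gcongr
        · exact mul_nonneg hs.1 zero_le_one
        · exact hs.1
        · exact norm_posPow_le_max hp u
    _ ≤ R := by rwa [mul_one]

lemma exists_mul_norm_le_of_isCarrierSol (hG : IsCompactOperator G) (hν : Continuous ν)
    (hν_pos : ∀ u ≠ 0, 0 < ν u) (hd : 0 ≤ d) (ψ : C(X, ℝ)) :
    ∃ δ > 0, ∀ (p : Ioi (0 : ℝ)) u, (p : ℝ) ≤ 1 → IsCarrierSol G ν d p ψ u → 1 ≤ ‖u‖ →
      δ * ‖u‖ ≤ ν u := by
  obtain ⟨K, hK, hKu⟩ := exists_isCompact_smul_mem_of_isCarrierSol hG ν hd ψ 1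
  obtain ⟨δ, hδ, hδ_le⟩ := (hK.inter_right
    (Metric.isClosed_sphere (x := 0) (ε := 1))).exists_forall_le' hν.continuousOn
    fun w hw ↦ hν_pos w (ne_zero_of_mem_unit_sphere ⟨w, hw.2⟩)
  refine ⟨δ, hδ, fun p u hp hu h1 ↦ ?_⟩
  have hu_pos : 0 < ‖u‖ := zero_lt_one.trans_le h1
  have hw : ‖u‖⁻¹ • u ∈ Metric.sphere 0 1 := by
    rw [mem_sphere_zero_iff_norm, norm_smul, norm_inv, norm_norm, inv_mul_cancel₀ hu_pos.ne']
  have h := hδ_le _ ⟨hKu p u hp hu ‖u‖⁻¹ ⟨by positivity, inv_le_one_of_one_le₀ h1⟩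
    (by rw [max_eq_right h1, inv_mul_cancel₀ hu_pos.ne']), hw⟩
  rwa [map_smul_eq_mul, norm_inv, norm_norm, le_inv_mul_iff₀ hu_pos, mul_comm] at h

theorem exists_norm_le_of_isCarrierSol (hG : IsCompactOperator G) (hν : Continuous ν)
    (hν_pos : ∀ u ≠ 0, 0 < ν u) (hd : 0 < d) (ψ : C(X, ℝ)) :
    ∃ M, ∀ (p : Ioi (0 : ℝ)) u, (p : ℝ) ≤ 1 → IsCarrierSol G ν d p ψ u → ‖u‖ ≤ M := by
  obtain ⟨δ, hδ, hδ_le⟩ := exists_mul_norm_le_of_isCarrierSol hG hν hν_pos hd.le ψ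
  refine ⟨max 1 ((‖G‖ + ‖ψ‖) / (d * δ ^ 2)), fun p u hp hu ↦ ?_⟩
  rcases le_total ‖u‖ 1 with h1 | h1
  · exact h1.trans (le_max_left _ _)
  have hu_pos : 0 < ‖u‖ := zero_lt_one.trans_le h1
  have hA : (1 + d * ν u ^ 2) * ‖u‖ ≤ (‖G‖ + ‖ψ‖) * ‖u‖ :=
    calc (1 + d * ν u ^ 2) * ‖u‖ = ‖G (posPow p u) + ψ‖ := by
          rw [← hu, norm_smul, Real.norm_of_nonneg (by positivity)]
      _ ≤ ‖G‖ * ‖posPow p u‖ + ‖ψ‖ * 1 := by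
          rw [mul_one]
          exact (norm_add_le _ _).trans (by gcongr; exact G.le_opNorm _)
      _ ≤ ‖G‖ * ‖u‖ + ‖ψ‖ * ‖u‖ := by
          gcongr
          exact (norm_posPow_le_max hp u).trans_eq (max_eq_right h1)
      _ = (‖G‖ + ‖ψ‖) * ‖u‖ := by ring
  refine le_max_of_le_right ((le_div_iff₀' (by positivity)).2 ?_)
  calc d * δ ^ 2 * ‖u‖ ≤ d * δ ^ 2 * ‖u‖ ^ 2 := by
        gcongr
        exact le_self_pow₀ h1 two_ne_zero
    _ = d * (δ * ‖u‖) ^ 2 := by ring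
    _ ≤ d * ν u ^ 2 := by gcongr; exact hδ_le p u hp hu h1
    _ ≤ ‖G‖ + ‖ψ‖ := by linarith [le_of_mul_le_mul_right hA hu_pos]

lemma isClosed_setOf_isCarrierSol (hν : Continuous ν) :
    IsClosed {w : Ioi (0 : ℝ) × C(X, ℝ) | IsCarrierSol G ν d w.1 ψ w.2} := by
  have := continuous_posPow (X := X)
  exact isClosed_eq (by fun_prop) (by fun_prop)

/- The solutions for `p < 1` stay in a compact set, and converge along a subsequence as `p → 1`. -/
theorem exists_isCarrierSol_of_eq_one (hG_mono : Monotone G) (hG : IsCompactOperator G)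
    (hν : Continuous ν) (hν_mono : MonotoneOn ν (Ici 0)) (hν_pos : ∀ u ≠ 0, 0 < ν u) (hd : 0 < d)
    (hψ : 0 ≤ ψ) (hp : (p : ℝ) = 1) : ∃ u, IsCarrierSol G ν d p ψ u := by
  obtain ⟨M, hM⟩ := exists_norm_le_of_isCarrierSol hG hν hν_pos hd ψ
  obtain ⟨K, hK, hKu⟩ := exists_isCompact_smul_mem_of_isCarrierSol hG ν hd.le ψ (max 1 M)
  have := isCompact_iff_compactSpace.1 hK
  have hclosed : IsClosed (Prod.fst '' {w : Ioi (0 : ℝ) × K | IsCarrierSol G ν d w.1 ψ w.2}) :=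
    isClosedMap_fst_of_compactSpace _
      ((isClosed_setOf_isCarrierSol hν).preimage (continuous_id.prodMap continuous_subtype_val))
  have hlt : Iio p ⊆ Prod.fst '' {w : Ioi (0 : ℝ) × K | IsCarrierSol G ν d w.1 ψ w.2} := by
    intro q hqp
    have hq : (q : ℝ) < 1 := hp ▸ hqp
    obtain ⟨u, hu⟩ := exists_isCarrierSol_of_lt_one hG_mono hG hν_mono hd.le hψ hq
    have huK := hKu q u hq.le hu 1 ⟨zero_le_one, le_rfl⟩
      (by rw [one_mul]; exact max_le_max_left 1 (hM q u hq.le hu))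
    exact ⟨(q, ⟨u, one_smul ℝ u ▸ huK⟩), hu, rfl⟩
  have hp_mem : p ∈ closure (Iio p) := by
    have hp_pos : 0 < (p : ℝ) := p.2
    rw [closure_Iio' ⟨⟨p / 2, half_pos hp_pos⟩, half_lt_self hp_pos⟩]
    exact self_mem_Iic
  obtain ⟨⟨_, u⟩, hu, rfl⟩ := hclosed.closure_subset_iff.2 hlt hp_mem
  exact ⟨u, hu⟩

theorem exists_pos_forall_exists_isCarrierSol_smul (hG_mono : Monotone G)
    (hG : IsCompactOperator G) (hν : Continuous ν) (hν_mono : MonotoneOn ν (Ici 0))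
    (hν_pos : ∀ u ≠ 0, 0 < ν u) (hd : 0 < d) (hφ : 0 ≤ φ) (p : Ioi (0 : ℝ)) :
    ∃ lf : ℝ, 0 < lf ∧ ∀ lam : ℝ, 0 < lam → lam < lf → ∃ u, IsCarrierSol G ν d p (lam • φ) u := by
  rcases lt_trichotomy (p : ℝ) 1 with hp | hp | hp
  · exact ⟨1, one_pos, fun lam hlam _ ↦
      exists_isCarrierSol_of_lt_one hG_mono hG hν_mono hd.le (smul_nonneg hlam.le hφ) hp⟩
  · exact ⟨1, one_pos, fun lam hlam _ ↦
      exists_isCarrierSol_of_eq_one hG_mono hG hν hν_mono hν_pos hd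
        (smul_nonneg hlam.le hφ) hp⟩
  · have hlim : Tendsto (fun lam : ℝ ↦ lam • φ) (𝓝[>] 0) (𝓝 0) :=
      ((continuous_id.smul continuous_const).tendsto' _ _ (zero_smul ℝ φ)).mono_left
        nhdsWithin_le_nhds
    obtain ⟨lf, hlf, hsub⟩ := mem_nhdsGT_iff_exists_Ioo_subset.1
      (hlim.eventually (eventually_exists_isCarrierSol_of_one_lt hν hp))
    exact ⟨lf, hlf, fun lam hlam hlam_lt ↦ hsub ⟨hlam, hlam_lt⟩⟩

end AbstractCarrierExistence

section ZeroExtendCarrier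

variable {α : Type*} [TopologicalSpace α] {s : Set α} {G : C(s, ℝ) →L[ℝ] C(s, ℝ)}
  {ν : Seminorm ℝ C(s, ℝ)} {d : ℝ} {p : Ioi (0 : ℝ)} {ψ u : C(s, ℝ)}

lemma zeroExtend_posPow (hu : 0 ≤ u) (x : α) :
    zeroExtend (posPow p u) x = zeroExtend u x ^ (p : ℝ) := by
  by_cases hx : x ∈ s
  · lift x to s using hx
    rw [zeroExtend_coe, zeroExtend_coe, posPow_apply,
      posPart_of_nonneg (ContinuousMap.le_def.1 hu x)]
  · rw [zeroExtend_of_notMem _ hx, zeroExtend_of_notMem _ hx, zero_rpow (mem_Ioi.1 p.2).ne']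

lemma IsCarrierSol.zeroExtend_eq (hu : IsCarrierSol G ν d p ψ u) (hd : 0 ≤ d) :
    zeroExtend u = (1 + d * ν u ^ 2)⁻¹ • (zeroExtend (G (posPow p u)) + zeroExtend ψ) := by
  rw [← zeroExtend_add, ← zeroExtend_smul]
  exact congrArg (fun v : C(s, ℝ) ↦ zeroExtend v) (hu.eq_inv_smul hd)

end ZeroExtendCarrier

section ClassicalSolution

variable {N : ℕ} {Ω : Opens ℝ^N} [CompactSpace (closure (Ω : Set ℝ^N))]
  {G : C(closure (Ω : Set ℝ^N), ℝ) →L[ℝ] C(closure (Ω : Set ℝ^N), ℝ)}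
  {ν : Seminorm ℝ C(closure (Ω : Set ℝ^N), ℝ)} {d : ℝ} {p : Ioi (0 : ℝ)}
  {ψ u : C(closure (Ω : Set ℝ^N), ℝ)}

namespace IsSolutionOperator

lemma eq_zero_of_exists_eq_zero (hG : IsSolutionOperator Ω G) (hN : 1 ≤ N)
    (hΩ : IsPreconnected (Ω : Set ℝ^N)) (hu : 0 ≤ u) (hGu : ∃ x ∈ Ω, zeroExtend (G u) x = 0) :
    ∀ x ∈ Ω, zeroExtend (G u) x = 0 ∧ zeroExtend u x = 0 := by
  obtain ⟨y, hy, hGy⟩ := hGu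
  have hGu_nonneg : ∀ x, 0 ≤ zeroExtend (G u) x :=
    zeroExtend_nonneg ((monotone_iff_map_nonneg G).1 (hG.monotone hN hΩ) u hu)
  have hGu_zero : EqOn (zeroExtend (G u)) 0 Ω := fun x hx ↦
    ((hG u).isWeakSolution.eq_of_isMinOn hN hΩ (hG u).locallyIntegrable
      (hG u).continuous.continuousOn (locallyIntegrable_zeroExtend u) (norm_zeroExtend_le u)
      (zeroExtend_nonneg hu) hy (fun z _ ↦ hGy ▸ hGu_nonneg z) x hx).trans hGy
  refine fun x hx ↦ ⟨hGu_zero hx, ?_⟩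
  rw [← (hG u).isWeakSolution.neg_lapl_eq (contDiffOn_const.congr hGu_zero)
    ((continuousOn_zeroExtend u.continuous).mono subset_closure) x hx, eqOn_lapl hGu_zero hx,
    lapl_zero, Pi.zero_apply, neg_zero]

lemma contDiffOn_one (hG : IsSolutionOperator Ω G) (hN : 1 ≤ N)
    (u : C(closure (Ω : Set ℝ^N), ℝ)) : ContDiffOn ℝ 1 (zeroExtend (G u)) Ω :=
  (hG u).isWeakSolution.contDiffOn_one hN (hG u).locallyIntegrable (hG u).continuous.continuousOn
    (locallyIntegrable_zeroExtend u) (norm_zeroExtend_le u)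

lemma contDiffOn_two (hG : IsSolutionOperator Ω G) (hN : 1 ≤ N)
    (hu : ContDiffOn ℝ 1 (zeroExtend u) Ω) : ContDiffOn ℝ 2 (zeroExtend (G u)) Ω :=
  (hG u).isWeakSolution.contDiffOn_two hN (hG u).locallyIntegrable (hG u).continuous.continuousOn
    (locallyIntegrable_zeroExtend u) (norm_zeroExtend_le u) hu

end IsSolutionOperator

namespace IsCarrierSol

lemma zeroExtend_pos (hu : IsCarrierSol G ν d p ψ u) (hG : IsSolutionOperator Ω G) (hN : 1 ≤ N)
    (hΩ : IsPreconnected (Ω : Set ℝ^N)) (hd : 0 ≤ d) (hψ : 0 ≤ ψ)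
    (hψ_ne : ∃ x ∈ Ω, zeroExtend ψ x ≠ 0) : ∀ x ∈ Ω, 0 < zeroExtend u x := by
  have hG_mono := hG.monotone hN hΩ
  have hu_nonneg := hu.nonneg hG_mono hd hψ
  have hA : 0 < 1 + d * ν u ^ 2 := by positivity
  have hw_nonneg : ∀ x, 0 ≤ zeroExtend (G (posPow p u)) x :=
    zeroExtend_nonneg ((monotone_iff_map_nonneg G).1 hG_mono _ (posPow_nonneg u))
  have heq (x) : zeroExtend u x =
      (1 + d * ν u ^ 2)⁻¹ * (zeroExtend (G (posPow p u)) x + zeroExtend ψ x) :=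
    congrFun (hu.zeroExtend_eq hd) x
  intro x hx
  rw [heq]
  refine mul_pos (inv_pos.2 hA)
    (add_pos_of_pos_of_nonneg ((hw_nonneg x).lt_of_ne' fun hwx ↦ ?_) (zeroExtend_nonneg hψ x))
  obtain ⟨y, hy, hψy⟩ := hψ_ne
  obtain ⟨hwy, hpow⟩ :=
    hG.eq_zero_of_exists_eq_zero hN hΩ (posPow_nonneg u) ⟨x, hx, hwx⟩ y hy
  rw [zeroExtend_posPow hu_nonneg] at hpow
  have huy : zeroExtend u y = 0 :=
    ((rpow_eq_zero_iff_of_nonneg (zeroExtend_nonneg hu_nonneg y)).1 hpow).1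
  rw [heq, hwy, zero_add] at huy
  exact mul_ne_zero (inv_pos.2 hA).ne' hψy huy

lemma contDiffOn_two_apply (hu : IsCarrierSol G ν d p ψ u) (hG : IsSolutionOperator Ω G)
    (hN : 1 ≤ N) (hd : 0 ≤ d) (hψ : ContDiffOn ℝ 1 (zeroExtend ψ) Ω) (hu_nonneg : 0 ≤ u)
    (hu_pos : ∀ x ∈ Ω, 0 < zeroExtend u x) :
    ContDiffOn ℝ 2 (zeroExtend (G (posPow p u))) Ω := by
  have hu_diff : ContDiffOn ℝ 1 (zeroExtend u) Ω := by
    rw [hu.zeroExtend_eq hd]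
    exact contDiffOn_const.smul ((hG.contDiffOn_one hN _).add hψ)
  exact hG.contDiffOn_two hN <| (hu_diff.rpow_const_of_ne fun x hx ↦ (hu_pos x hx).ne').congr
    fun x _ ↦ zeroExtend_posPow hu_nonneg x

lemma contDiffOn_two (hu : IsCarrierSol G ν d p ψ u) (hG : IsSolutionOperator Ω G) (hN : 1 ≤ N)
    (hd : 0 ≤ d) (hψ : ContDiffOn ℝ 2 (zeroExtend ψ) Ω) (hu_nonneg : 0 ≤ u)
    (hu_pos : ∀ x ∈ Ω, 0 < zeroExtend u x) : ContDiffOn ℝ 2 (zeroExtend u) Ω := by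
  rw [hu.zeroExtend_eq hd]
  exact contDiffOn_const.smul
    ((hu.contDiffOn_two_apply hG hN hd (hψ.of_le one_le_two) hu_nonneg hu_pos).add hψ)

lemma neg_mul_lapl_eq (hu : IsCarrierSol G ν d p ψ u) (hG : IsSolutionOperator Ω G) (hN : 1 ≤ N)
    (hd : 0 ≤ d) (hψ : ContDiffOn ℝ 2 (zeroExtend ψ) Ω) (hu_nonneg : 0 ≤ u)
    (hu_pos : ∀ x ∈ Ω, 0 < zeroExtend u x) : ∀ x ∈ Ω,
      -(1 + d * ν u ^ 2) * lapl (zeroExtend u) x =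
        zeroExtend u x ^ (p : ℝ) - lapl (zeroExtend ψ) x := by
  intro x hx
  have hx_nhds := Ω.isOpen.mem_nhds hx
  have hw := hu.contDiffOn_two_apply hG hN hd (hψ.of_le one_le_two) hu_nonneg hu_pos
  have hwx := hw.contDiffAt hx_nhds
  have hψx := hψ.contDiffAt hx_nhds
  have hpow : zeroExtend u x ^ (p : ℝ) = -lapl (zeroExtend (G (posPow p u))) x := by
    rw [(hG _).isWeakSolution.neg_lapl_eq hw
      ((continuousOn_zeroExtend (posPow p u).continuous).mono subset_closure) x hx,
      zeroExtend_posPow hu_nonneg]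
  have hA : 1 + d * ν u ^ 2 ≠ 0 := by positivity
  have hlapl : lapl (zeroExtend u) x = (1 + d * ν u ^ 2)⁻¹ *
      (lapl (zeroExtend (G (posPow p u))) x + lapl (zeroExtend ψ) x) := by
    rw [hu.zeroExtend_eq hd, lapl_const_smul (u := _ + _) _ (hwx.add hψx), lapl_add hwx hψx]
  rw [hlapl, hpow, neg_mul, mul_inv_cancel_left₀ hA]
  ring

end IsCarrierSol

theorem exists_pos_forall_exists_classicalSol {ξ : ℝ^N → ℝ} {φ : C(closure (Ω : Set ℝ^N), ℝ)}
    (hN : 1 ≤ N) (hΩ : IsPreconnected (Ω : Set ℝ^N)) (hξ : IsTorsionFn (Ω : Set ℝ^N) ξ)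
    (hd : 0 < d) (hφ : 0 ≤ φ) (hφ_diff : ContDiffOn ℝ 2 (zeroExtend φ) Ω)
    (hφ_ne : ∃ x ∈ Ω, zeroExtend φ x ≠ 0) (hφ_zero : ∀ x ∉ Ω, zeroExtend φ x = 0)
    (p : Ioi (0 : ℝ)) :
    ∃ lf : ℝ, 0 < lf ∧ ∀ lam : ℝ, 0 < lam → lam < lf → ∃ u : ℝ^N → ℝ,
      ContinuousOn u (closure Ω) ∧ ContDiffOn ℝ 2 u Ω ∧
      (∀ x ∈ Ω, -(1 + d * LpNorm Ω 2 u ^ 2) * lapl u x =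
        u x ^ (p : ℝ) - lam * lapl (zeroExtend φ) x) ∧
      (∀ x ∈ Ω, 0 < u x) ∧ ∀ x ∉ Ω, u x = 0 := by
  obtain ⟨G, hG, hG_le⟩ := exists_isSolutionOperator hN hΩ hξ
  have hG_mono := hG.monotone hN hΩ
  obtain ⟨lf, hlf, hsol⟩ := exists_pos_forall_exists_isCarrierSol_smul hG_mono
    (hG.isCompactOperator hN hξ hG_le) (continuous_l2Seminorm (closureMeasure Ω))
    (fun u hu v _ huv ↦ l2Seminorm_mono _ hu huv) (fun u hu ↦ l2Seminorm_pos _ hu) hd hφ p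
  refine ⟨lf, hlf, fun lam hlam hlam_lt ↦ ?_⟩
  obtain ⟨u, hu⟩ := hsol lam hlam hlam_lt
  have hψ : zeroExtend (lam • φ : C(_, ℝ)) = lam • zeroExtend φ := zeroExtend_smul lam φ
  have hψ_nonneg := smul_nonneg hlam.le hφ
  have hψ_diff : ContDiffOn ℝ 2 (zeroExtend (lam • φ : C(_, ℝ))) Ω :=
    hψ ▸ contDiffOn_const.smul hφ_diff
  have hψ_ne : ∃ x ∈ Ω, zeroExtend (lam • φ : C(_, ℝ)) x ≠ 0 :=
    hφ_ne.imp fun x hx ↦ ⟨hx.1, hψ ▸ mul_ne_zero hlam.ne' hx.2⟩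
  have hu_nonneg := hu.nonneg hG_mono hd.le hψ_nonneg
  have hu_pos := hu.zeroExtend_pos hG hN hΩ hd.le hψ_nonneg hψ_ne
  refine ⟨zeroExtend u, continuousOn_zeroExtend u.continuous,
    hu.contDiffOn_two hG hN hd.le hψ_diff hu_nonneg hu_pos, fun x hx ↦ ?_, hu_pos, fun x hx ↦ ?_⟩
  · rw [LpNorm_two_zeroExtend, hu.neg_mul_lapl_eq hG hN hd.le hψ_diff hu_nonneg hu_pos x hx, hψ,
      lapl_const_smul lam (hφ_diff.contDiffAt (Ω.isOpen.mem_nhds hx))]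
  · rw [hu.zeroExtend_eq hd.le, hψ]
    simp [(hG _).eq_zero x hx, hφ_zero x hx]

end ClassicalSolution

theorem stmt_3_general {N : ℕ} (hN : 1 ≤ N) {Ω : Set ℝ^N} (hΩo : IsOpen Ω)
    (hΩconn : IsPreconnected Ω) (hΩbd : Bornology.IsBounded Ω) {d p : ℝ} (hd : 0 < d) (hp : 0 < p)
    {f φ ξ : ℝ^N → ℝ} (hfne : ¬ ∀ x ∈ Ω, f x = 0) (hφc : ContinuousOn φ (closure Ω))
    (hφ2 : ContDiffOn ℝ 2 φ Ω) (hφeq : ∀ x ∈ Ω, -lapl φ x = f x) (hφnn : ∀ x ∈ Ω, 0 ≤ φ x)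
    (hφbd : ∀ x ∈ frontier Ω, φ x = 0) (hξ : IsTorsionFn Ω ξ) :
    ∃ lf : ℝ, 0 < lf ∧ ∀ lam : ℝ, 0 < lam → lam < lf → ∃ u : ℝ^N → ℝ,
      ContinuousOn u (closure Ω) ∧ ContDiffOn ℝ 2 u Ω ∧
      (∀ x ∈ Ω, (-(1 + d * (LpNorm Ω 2 u) ^ 2)) * lapl u x = u x ^ p + lam * f x) ∧
      (∀ x ∈ Ω, 0 < u x) ∧ (∀ x ∈ frontier Ω, u x = 0) := by
  lift Ω to Opens ℝ^N using hΩo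
  have := isCompact_iff_compactSpace.1 hΩbd.isCompact_closure
  let Φ : C(closure (Ω : Set ℝ^N), ℝ) := ⟨fun x ↦ φ x, hφc.domRestrict⟩
  have hΦ : EqOn (zeroExtend Φ) φ (closure Ω) := fun x hx ↦ zeroExtend_coe Φ ⟨x, hx⟩
  have hΦΩ : EqOn (zeroExtend Φ) φ Ω := hΦ.mono subset_closure
  have hΦ_nonneg : 0 ≤ Φ := ContinuousMap.le_def.2 fun x ↦
    le_on_closure hφnn continuousOn_const hφc x.2
  have hΦ_ne : ∃ x ∈ Ω, zeroExtend Φ x ≠ 0 := by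
    by_contra! h : EqOn (zeroExtend Φ) 0 Ω
    refine hfne fun x hx ↦ ?_
    rw [← hφeq x hx, ← eqOn_lapl hΦΩ hx, eqOn_lapl h hx, lapl_zero, Pi.zero_apply, neg_zero]
  have hΦ_zero : ∀ x ∉ Ω, zeroExtend Φ x = 0 := fun x hx ↦ by
    by_cases hx' : x ∈ closure (Ω : Set ℝ^N)
    · rw [hΦ hx', hφbd x (Ω.isOpen.frontier_eq ▸ ⟨hx', hx⟩)]
    · exact zeroExtend_of_notMem Φ hx'
  obtain ⟨lf, hlf, hsol⟩ := exists_pos_forall_exists_classicalSol hN hΩconn hξ hd hΦ_nonneg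
    (hφ2.congr hΦΩ) hΦ_ne hΦ_zero ⟨p, hp⟩
  refine ⟨lf, hlf, fun lam hlam hlam_lt ↦ ?_⟩
  obtain ⟨u, hu_cont, hu_diff, hu_eq, hu_pos, hu_zero⟩ := hsol lam hlam hlam_lt
  refine ⟨u, hu_cont, hu_diff, fun x hx ↦ ?_, hu_pos,
    fun x hx ↦ hu_zero x fun hxΩ ↦ (Ω.isOpen.frontier_eq ▸ hx).2 hxΩ⟩
  rw [hu_eq x hx, eqOn_lapl hΦΩ hx, ← hφeq x hx, mul_neg, sub_eq_add_neg]

/-- Theorem 2.1: for small `λ > 0`, the inhomogeneous Carrier problem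
`-(1 + d‖u‖₂²) Δu = u^p + λ f`, `u > 0` in `Ω`, `u = 0` on `∂Ω`, has a classical solution. -/
theorem stmt_3 {N : ℕ} (hN : 1 ≤ N) (Ω : Set (EuclideanSpace ℝ (Fin N)))
    (hΩo : IsOpen Ω) (hΩconn : IsConnected Ω) (hΩbd : Bornology.IsBounded Ω)
    (d p : ℝ) (hd : 0 < d) (hp : 0 < p)
    (f : EuclideanSpace ℝ (Fin N) → ℝ)
    (hf1 : ContDiffOn ℝ 1 f Ω) (hfc : ContinuousOn f (closure Ω))
    (hfne : ¬ (∀ x ∈ Ω, f x = 0))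
    -- the problem -Δφ = f, φ ≥ 0 in Ω, φ = 0 on ∂Ω has a classical solution
    (φ : EuclideanSpace ℝ (Fin N) → ℝ)
    (hφc : ContinuousOn φ (closure Ω)) (hφ2 : ContDiffOn ℝ 2 φ Ω)
    (hφeq : ∀ x ∈ Ω, -lapl φ x = f x) (hφnn : ∀ x ∈ Ω, 0 ≤ φ x)
    (hφbd : ∀ x ∈ frontier Ω, φ x = 0)
    -- Ω admits a torsion function
    (ξ : EuclideanSpace ℝ (Fin N) → ℝ) (hξ : IsTorsionFn Ω ξ) :
    ∃ lf : ℝ, 0 < lf ∧ ∀ lam : ℝ, 0 < lam → lam < lf →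
      ∃ u : EuclideanSpace ℝ (Fin N) → ℝ,
        ContinuousOn u (closure Ω) ∧ ContDiffOn ℝ 2 u Ω ∧
        (∀ x ∈ Ω, (-(1 + d * (LpNorm Ω 2 u) ^ 2)) * lapl u x = u x ^ p + lam * f x) ∧
        (∀ x ∈ Ω, 0 < u x) ∧
        (∀ x ∈ frontier Ω, u x = 0) := by
  exact stmt_3_general hN hΩo hΩconn.isPreconnected hΩbd hd hp hfne hφc hφ2 hφeq hφnn hφbd hξ
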